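/- arXiv:1504.05822 — 10 statements merged into one kernel-verified Lean document; each statement's English description precedes it below -/
import Mathlib

section
/- Let N ≥ 1, let A and B be N×N complex matrices with B = B*, and let h(p) = e^{-ip}A + e^{ip}A* + B. Suppose λ : ℝ → ℝ and W : ℝ → ℂ^N are differentiable functions such that for all p ∈ ℝ, ‖W(p)‖ = 1 and h(p)W(p) = λ(p)W(p). Then for all p ∈ ℝ, λ'(p) = −2·Im(e^{ip}·⟨A W(p), W(p)⟩). -/
open Matrix Complex

/-!
Pairing the eigenvalue equation at `q` with a left eigenvector `φ` of `H p` gives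
`φ ((H q - H p) (W q)) = (lam q - lam p) * φ (W q)`. Dividing by `q - p` and letting `q → p`,
so that `W q → W p`, differentiates `lam` without differentiating `W`. When `H p` is self-adjoint,
`⟪W p, ·⟫` is such a left eigenvector and the limit is the Hellmann–Feynman formula. For
`h(p) = e^{-ip} A + e^{ip} A* + B` the derivative is `i (X - X*)` with `X = e^{ip} A*`, so its
expectation is `i (z - conj z) = -2 Im z`, where `z = e^{ip} ⟪A W, W⟫`.
-/

open Filter
open scoped Topology InnerProductSpace ComplexConjugate

theorem hasDerivAt_eigenvalue_of_leftEigenvector {𝕜 𝕂 E : Type*} [NontriviallyNormedField 𝕜]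
    [NontriviallyNormedField 𝕂] [NormedAlgebra 𝕜 𝕂] [NormedAddCommGroup E] [NormedSpace 𝕜 E]
    [NormedSpace 𝕂 E] [IsScalarTower 𝕜 𝕂 E] {H : 𝕜 → E →L[𝕂] E} {H' : E →L[𝕂] E}
    {lam : 𝕜 → 𝕂} {W : 𝕜 → E} {p : 𝕜} {φ : E →L[𝕂] 𝕂}
    (hH : HasDerivAt H H' p) (hW : ContinuousAt W p)
    (heig : ∀ᶠ q in 𝓝 p, H q (W q) = lam q • W q)
    (hφ : ∀ v, φ (H p v) = lam p * φ v) (hφW : φ (W p) ≠ 0) :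
    HasDerivAt lam (φ (H' (W p)) / φ (W p)) p := by
  have hφW_cont : ContinuousAt (fun q => φ (W q)) p := φ.continuous.continuousAt.comp hW
  have slope_eq : ∀ᶠ q in 𝓝[≠] p, φ (slope H p q (W q)) / φ (W q) = slope lam p q := by
    filter_upwards [heig.filter_mono nhdsWithin_le_nhds,
      (hφW_cont.eventually_ne hφW).filter_mono nhdsWithin_le_nhds] with q hq hq_ne
    have increment : φ ((H q - H p) (W q)) = (lam q - lam p) * φ (W q) := by
      simp only [_root_.sub_apply, map_sub, hq, hφ, map_smul, smul_eq_mul, sub_mul]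
    rw [slope_def_module, slope_def_module, _root_.smul_apply, φ.map_smul_of_tower, increment,
      smul_div_assoc, mul_div_cancel_right₀ _ hq_ne]
  have slope_apply : Tendsto (fun q => slope H p q (W q)) (𝓝[≠] p) (𝓝 (H' (W p))) :=
    (isBoundedBilinearMap_apply.continuous.tendsto (H', W p)).comp
      (hH.tendsto_slope.prodMk_nhds (hW.mono_left nhdsWithin_le_nhds))
  exact hasDerivAt_iff_tendsto_slope.2 <|
    (((φ.continuous.tendsto _).comp slope_apply).div
      (hφW_cont.mono_left nhdsWithin_le_nhds) hφW).congr' slope_eq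

theorem hasDerivAt_eigenvalue_of_isSymmetric {𝕂 E : Type*} [RCLike 𝕂] [NormedAddCommGroup E]
    [InnerProductSpace 𝕂 E] [NormedSpace ℝ E] [IsScalarTower ℝ 𝕂 E]
    {H : ℝ → E →L[𝕂] E} {H' : E →L[𝕂] E} {lam : ℝ → ℝ} {W : ℝ → E} {p : ℝ}
    (hH : HasDerivAt H H' p) (hsymm : (H p).IsSymmetric) (hW : ContinuousAt W p)
    (hWp : W p ≠ 0) (heig : ∀ᶠ q in 𝓝 p, H q (W q) = (lam q : 𝕂) • W q) :
    HasDerivAt lam (RCLike.re ⟪W p, H' (W p)⟫_𝕂 / ‖W p‖ ^ 2) p := by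
  have inner_left_eigen (v : E) : ⟪W p, H p v⟫_𝕂 = (lam p : 𝕂) * ⟪W p, v⟫_𝕂 := by
    rw [← hsymm.apply_clm, heig.self_of_nhds, inner_smul_left, RCLike.conj_ofReal]
  have hasDerivAt_coe := hasDerivAt_eigenvalue_of_leftEigenvector (φ := innerSL 𝕂 (W p))
    hH hW heig inner_left_eigen (inner_self_ne_zero.2 hWp)
  have hasDerivAt_re := (RCLike.reCLM (K := 𝕂)).hasFDerivAt.comp_hasDerivAt p hasDerivAt_coe
  simp only [Function.comp_def, RCLike.reCLM_apply, RCLike.ofReal_re, innerSL_apply_apply]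
    at hasDerivAt_re
  rwa [inner_self_eq_norm_sq_to_K, ← RCLike.ofReal_pow, RCLike.div_re_ofReal] at hasDerivAt_re

/-- The Bloch symbol `h(p) = e^{-ip} a + e^{ip} a* + b` of the translation-invariant nearest
neighbour operator on `ℤ` with hopping term `a` and on-site term `b`. The coefficients live in any
type with a star so that matrices and bounded operators are both covered. -/
noncomputable def blochSymbol {R : Type*} [Add R] [SMul ℂ R] [Star R] (a b : R) (p : ℝ) : R :=
  exp (-(p * I)) • a + exp (p * I) • star a + b

theorem conj_exp_ofReal_mul_I (p : ℝ) : conj (exp (p * I)) = exp (-(p * I)) := by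
  rw [← exp_conj, map_mul, conj_ofReal, conj_I, mul_neg]

theorem isSelfAdjoint_blochSymbol {R : Type*} [AddCommMonoid R] [StarAddMonoid R] [SMul ℂ R]
    [StarModule ℂ R] (a : R) {b : R} (hb : IsSelfAdjoint b) (p : ℝ) :
    IsSelfAdjoint (blochSymbol a b p) := by
  have star_hopping : star (exp (-(p * I)) • a) = exp (p * I) • star a := by
    rw [star_smul, ← conj_exp_ofReal_mul_I, ← starRingEnd_apply, conj_conj]
  rw [blochSymbol, ← star_hopping]
  exact (IsSelfAdjoint.add_star_self _).add hb

theorem hasDerivAt_blochSymbol {R : Type*} [NormedAddCommGroup R] [NormedSpace ℂ R] [Star R]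
    (a b : R) (p : ℝ) :
    HasDerivAt (blochSymbol a b) (I • (exp (p * I) • star a - exp (-(p * I)) • a)) p := by
  have hasDerivAt_phase : HasDerivAt (fun q : ℝ => (q : ℂ) * I) I p := by
    simpa using (ofRealCLM.hasDerivAt (x := p)).mul_const I
  refine (((hasDerivAt_phase.neg.cexp.smul_const a).add
    (hasDerivAt_phase.cexp.smul_const (star a))).add_const b).congr_deriv ?_
  module

theorem map_blochSymbol {R S F : Type*} [Add R] [SMul ℂ R] [Star R] [Add S] [SMul ℂ S] [Star S]
    [FunLike F R S] [AddHomClass F R S] [MulActionHomClass F ℂ R S] [StarHomClass F R S] (f : F)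
    (a b : R) (p : ℝ) : f (blochSymbol a b p) = blochSymbol (f a) (f b) p := by
  simp only [blochSymbol, map_add, map_smul, map_star]

theorem re_inner_deriv_blochSymbol {E : Type*} [NormedAddCommGroup E] [InnerProductSpace ℂ E]
    [CompleteSpace E] (A : E →L[ℂ] E) (p : ℝ) (v : E) :
    (⟪v, (I • (exp (p * I) • star A - exp (-(p * I)) • A)) v⟫_ℂ).re =
      -2 * (exp (p * I) * ⟪A v, v⟫_ℂ).im := by
  set z := exp (p * I) * ⟪A v, v⟫_ℂ with hz
  have conj_z : conj z = exp (-(p * I)) * ⟪v, A v⟫_ℂ := by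
    rw [hz, map_mul, conj_exp_ofReal_mul_I, inner_conj_symm]
  have inner_eq : ⟪v, (I • (exp (p * I) • star A - exp (-(p * I)) • A)) v⟫_ℂ =
      I * (z - conj z) := by
    rw [conj_z, hz]
    simp only [_root_.smul_apply, _root_.sub_apply, inner_smul_right, inner_sub_right,
      ContinuousLinearMap.star_eq_adjoint, ContinuousLinearMap.adjoint_inner_right]
  rw [inner_eq, I_mul_re, sub_im, conj_im]
  ring

theorem eigenvalue_branch_deriv_general {E : Type*} [NormedAddCommGroup E]
    [InnerProductSpace ℂ E] [CompleteSpace E] {A B : E →L[ℂ] E} (hB : IsSelfAdjoint B)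
    {lam : ℝ → ℝ} {W : ℝ → E} {p : ℝ} (hW : ContinuousAt W p) (hWp : W p ≠ 0)
    (heig : ∀ᶠ q in 𝓝 p, blochSymbol A B q (W q) = (lam q : ℂ) • W q) :
    HasDerivAt lam (-2 * (exp (p * I) * ⟪A (W p), W p⟫_ℂ).im / ‖W p‖ ^ 2) p := by
  rw [← re_inner_deriv_blochSymbol]
  exact hasDerivAt_eigenvalue_of_isSymmetric (hasDerivAt_blochSymbol A B p)
    (isSelfAdjoint_blochSymbol A hB p).isSymmetric hW hWp heig

theorem hasDerivAt_eigenvalue_blochSymbol_mulVec {n : Type*} [Fintype n]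
    {A B : Matrix n n ℂ} (hB : B.IsHermitian) {lam : ℝ → ℝ} {W : ℝ → EuclideanSpace ℂ n} {p : ℝ}
    (hW : ContinuousAt W p) (hWp : W p ≠ 0)
    (heig : ∀ᶠ q in 𝓝 p, blochSymbol A B q *ᵥ (W q).ofLp = (lam q : ℂ) • (W q).ofLp) :
    HasDerivAt lam
      (-2 * (exp (p * I) * ⟪WithLp.toLp 2 (A *ᵥ (W p).ofLp), W p⟫_ℂ).im / ‖W p‖ ^ 2) p := by
  classical
  have hB_op : IsSelfAdjoint (toEuclideanCLM (𝕜 := ℂ) B) :=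
    hB.isSelfAdjoint.map (toEuclideanCLM (𝕜 := ℂ))
  have heig_op : ∀ᶠ q in 𝓝 p,
      blochSymbol (toEuclideanCLM (𝕜 := ℂ) A) (toEuclideanCLM (𝕜 := ℂ) B) q (W q) =
        (lam q : ℂ) • W q := by
    filter_upwards [heig] with q hq
    apply WithLp.ofLp_injective 2
    rw [← map_blochSymbol, ofLp_toEuclideanCLM, hq, WithLp.ofLp_smul]
  rw [← toEuclideanCLM_toLp]
  exact eigenvalue_branch_deriv_general hB_op hW hWp heig_op

/-- If `λ(p)` is a differentiable eigenvalue branch of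
`h(p) = e^{-ip}A + e^{ip}Aᴴ + B` with differentiable normalized eigenvector
branch `W(p)`, then `λ'(p) = -2 Im(e^{ip}⟨A W(p), W(p)⟩)`. -/
theorem eigenvalue_branch_deriv (N : ℕ) (hN : 1 ≤ N)
    (A B : Matrix (Fin N) (Fin N) ℂ) (hB : B = Bᴴ)
    (lam : ℝ → ℝ) (W : ℝ → EuclideanSpace ℂ (Fin N))
    (hlam : Differentiable ℝ lam) (hW : Differentiable ℝ W)
    (hnorm : ∀ p : ℝ, ‖W p‖ = 1)
    (heig : ∀ p : ℝ,
      (Complex.exp (-((p : ℂ) * Complex.I)) • A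
        + Complex.exp ((p : ℂ) * Complex.I) • Aᴴ + B) *ᵥ (W p)
      = (lam p : ℂ) • W p) :
    ∀ p : ℝ, deriv lam p
      = -2 * (Complex.exp ((p : ℂ) * Complex.I)
          * @inner ℂ (EuclideanSpace ℂ (Fin N)) _
              ((WithLp.equiv 2 (Fin N → ℂ)).symm (A *ᵥ W p)) (W p)).im := by
  intro p
  have hWp : W p ≠ 0 := norm_ne_zero_iff.1 (by simp [hnorm p])
  rw [(hasDerivAt_eigenvalue_blochSymbol_mulVec hB.symm (hW p).continuousAt hWp
    (.of_forall heig)).deriv, hnorm p, one_pow, div_one]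
  rfl
end

section
/- Let N ≥ 1, let A be an N×N Hermitian positive definite complex matrix, let B be an N×N complex matrix with B = B*, and let h(p) = e^{-ip}A + e^{ip}A* + B. Suppose λ : ℝ → ℝ and W : ℝ → ℂ^N are differentiable functions such that for all p ∈ ℝ, ‖W(p)‖ = 1 and h(p)W(p) = λ(p)W(p). Then for all p ∈ ℝ, λ'(p) = −2·⟨A W(p), W(p)⟩·sin p, where ⟨A W(p), W(p)⟩ is real and strictly positive; consequently λ is strictly decreasing on the interval [0, π]. -/
open Matrix Complex
open scoped ComplexOrder

/-!
Comparing the eigenvector equations at `t` and `s` and using that `T s` is symmetric gives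
`(λ s - λ t) ⟪v t, v s⟫ = ⟪T s (v t) - T t (v t), v s⟫`. Dividing by `s - t` and letting `s → t`
yields the Hellmann–Feynman formula `λ' ‖v‖² = ⟪T' v, v⟫`; this shows that `λ` is differentiable as
soon as `v` is continuous. For `T p = 2 cos p • A + B` the derivative is `-2 sin p` times the
Rayleigh quotient of `A`, which is negative on `(0, π)` when `A` is positive definite.
-/

open Filter Set Topology

theorem strictAntiOn_Icc_of_hasDerivAt_neg_two_mul_mul_sin {f g : ℝ → ℝ}
    (hf : ∀ p, HasDerivAt f (-2 * g p * Real.sin p) p) (hg : ∀ p, 0 < g p) :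
    StrictAntiOn f (Icc 0 Real.pi) := by
  refine strictAntiOn_of_deriv_neg (convex_Icc _ _)
    (fun p _ ↦ (hf p).continuousAt.continuousWithinAt) fun p hp ↦ ?_
  rw [interior_Icc] at hp
  have hpos : 0 < g p * Real.sin p := mul_pos (hg p) (Real.sin_pos_of_mem_Ioo hp)
  rw [(hf p).deriv]
  linarith

section HellmannFeynman

variable {𝕜 E : Type*} [RCLike 𝕜] [NormedAddCommGroup E] [InnerProductSpace 𝕜 E]
  [NormedSpace ℝ E] [IsScalarTower ℝ 𝕜 E]

theorem sub_smul_inner_eq_inner_map_sub_map {S T : E →ₗ[𝕜] E} (hT : T.IsSymmetric) {x y : E}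
    {μ ν : ℝ} (hx : S x = μ • x) (hy : T y = ν • y) :
    (ν - μ) • inner 𝕜 x y = inner 𝕜 (T x - S x) y := by
  rw [inner_sub_left, hT x y, hx, hy, inner_smul_left_eq_smul, inner_smul_right_eq_smul, sub_smul]

theorem hasDerivAt_eigenvalue_of_isSymmetric_s2 {T : ℝ → E →ₗ[𝕜] E} {lam : ℝ → ℝ} {v : ℝ → E}
    {w : E} {t : ℝ}
    (hT : ∀ᶠ s in 𝓝 t, (T s).IsSymmetric) (hTv : HasDerivAt (fun s ↦ T s (v t)) w t)
    (hv : ContinuousAt v t) (hv₀ : v t ≠ 0) (heig : ∀ᶠ s in 𝓝 t, T s (v s) = lam s • v s) :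
    HasDerivAt lam (RCLike.re (inner 𝕜 w (v t)) / ‖v t‖ ^ 2) t := by
  have overlap_tendsto :
      Tendsto (fun s ↦ RCLike.re (inner 𝕜 (v t) (v s))) (𝓝 t) (𝓝 (‖v t‖ ^ 2)) := by
    rw [← inner_self_eq_norm_sq (𝕜 := 𝕜)]
    exact (RCLike.continuous_re.tendsto _).comp (tendsto_const_nhds.inner hv)
  have overlap_ne_zero : ∀ᶠ s in 𝓝 t, RCLike.re (inner 𝕜 (v t) (v s)) ≠ 0 :=
    overlap_tendsto.eventually_ne (by simpa using hv₀)
  have slope_eq : ∀ᶠ s in 𝓝 t,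
      RCLike.re (inner 𝕜 (slope (fun s ↦ T s (v t)) t s) (v s)) / RCLike.re (inner 𝕜 (v t) (v s))
        = slope lam t s := by
    filter_upwards [hT, heig, overlap_ne_zero] with s hTs hs hne
    have hsub := sub_smul_inner_eq_inner_map_sub_map hTs heig.self_of_nhds hs
    rw [div_eq_iff hne, slope_def_module, slope_def_module, inner_smul_left_eq_smul, ← hsub,
      RCLike.smul_re, RCLike.smul_re, smul_eq_mul, mul_assoc]
  rw [hasDerivAt_iff_tendsto_slope] at hTv ⊢
  have numerator_tendsto :
      Tendsto (fun s ↦ RCLike.re (inner 𝕜 (slope (fun s ↦ T s (v t)) t s) (v s)))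
        (𝓝[≠] t) (𝓝 (RCLike.re (inner 𝕜 w (v t)))) :=
    (RCLike.continuous_re.tendsto _).comp (hTv.inner (hv.mono_left nhdsWithin_le_nhds))
  exact (numerator_tendsto.div (overlap_tendsto.mono_left nhdsWithin_le_nhds)
    (by simpa using hv₀)).congr' (slope_eq.filter_mono nhdsWithin_le_nhds)

theorem hasDerivAt_eigenvalue_smul_add {A B : E →ₗ[𝕜] E} (hA : A.IsSymmetric)
    (hB : B.IsSymmetric) {c lam : ℝ → ℝ} {c' : ℝ} {v : ℝ → E} {t : ℝ} (hc : HasDerivAt c c' t)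
    (hv : ContinuousAt v t) (hv₀ : v t ≠ 0)
    (heig : ∀ᶠ s in 𝓝 t, c s • A (v s) + B (v s) = lam s • v s) :
    HasDerivAt lam (c' * (RCLike.re (inner 𝕜 (A (v t)) (v t)) / ‖v t‖ ^ 2)) t := by
  have hsymm (s : ℝ) : ((c s : 𝕜) • A + B).IsSymmetric := (hA.smul (RCLike.conj_ofReal _)).add hB
  have happly (s : ℝ) (x : E) : ((c s : 𝕜) • A + B) x = c s • A x + B x := by
    rw [LinearMap.add_apply, LinearMap.smul_apply, ← RCLike.real_smul_eq_coe_smul]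
  have hderiv : HasDerivAt (fun s ↦ ((c s : 𝕜) • A + B) (v t)) (c' • A (v t)) t := by
    simpa only [happly] using (hc.smul_const (A (v t))).add_const (B (v t))
  convert hasDerivAt_eigenvalue_of_isSymmetric_s2 (.of_forall hsymm) hderiv hv hv₀
    (by simpa only [happly] using heig) using 1
  rw [inner_smul_left_eq_smul, RCLike.smul_re, mul_div_assoc]

theorem eigenvalue_branch_posdef_general {A B : E →ₗ[𝕜] E} (hA : A.IsSymmetric)
    (hA_pos : ∀ x ≠ 0, 0 < RCLike.re (inner 𝕜 (A x) x)) (hB : B.IsSymmetric)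
    {lam : ℝ → ℝ} {W : ℝ → E} (hW : Continuous W) (hW₀ : ∀ p, W p ≠ 0)
    (heig : ∀ p, (2 * Real.cos p) • A (W p) + B (W p) = lam p • W p) :
    (∀ p, HasDerivAt lam (-2 * (RCLike.re (inner 𝕜 (A (W p)) (W p)) / ‖W p‖ ^ 2) * Real.sin p) p) ∧
      StrictAntiOn lam (Icc 0 Real.pi) := by
  have hderiv (p : ℝ) :
      HasDerivAt lam (-2 * (RCLike.re (inner 𝕜 (A (W p)) (W p)) / ‖W p‖ ^ 2) * Real.sin p) p := by
    convert hasDerivAt_eigenvalue_smul_add hA hB ((Real.hasDerivAt_cos p).const_mul 2)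
      hW.continuousAt (hW₀ p) (.of_forall heig) using 1
    ring
  refine ⟨hderiv, strictAntiOn_Icc_of_hasDerivAt_neg_two_mul_mul_sin hderiv fun p ↦ ?_⟩
  have hWp := hW₀ p
  exact div_pos (hA_pos _ hWp) (by positivity)

end HellmannFeynman

theorem inner_toEuclideanLin_self_pos {𝕜 n : Type*} [RCLike 𝕜] [Fintype n] [DecidableEq n]
    {A : Matrix n n 𝕜} (hA : A.PosDef) {x : EuclideanSpace 𝕜 n} (hx : x ≠ 0) :
    0 < inner 𝕜 (toEuclideanLin A x) x := by
  rw [isSymmetric_toEuclideanLin_iff.2 hA.isHermitian x x, EuclideanSpace.inner_eq_star_dotProduct,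
    dotProduct_comm]
  exact hA.dotProduct_mulVec_pos (by simpa using hx)

theorem exp_smul_add_exp_smul_conjTranspose {n : Type*} {A : Matrix n n ℂ} (hA : A.IsHermitian)
    (p : ℝ) : exp (-(p * I)) • A + exp (p * I) • Aᴴ = (2 * Real.cos p) • A := by
  rw [hA.eq, ← add_smul, add_comm, ← neg_mul, ← two_cos]
  norm_cast

/-- If `A` is Hermitian positive definite and `B = Bᴴ`, then for a
differentiable normalized eigenpair branch `(λ(p), W(p))` of
`h(p) = e^{-ip}A + e^{ip}Aᴴ + B` one has
`λ'(p) = -2⟨A W(p), W(p)⟩ sin p` with `⟨A W(p), W(p)⟩` real and strictly positive;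
consequently `λ` is strictly decreasing on `[0, π]`. -/
theorem eigenvalue_branch_posdef (N : ℕ) (hN : 1 ≤ N)
    (A B : Matrix (Fin N) (Fin N) ℂ) (hA : A.PosDef) (hB : B = Bᴴ)
    (lam : ℝ → ℝ) (W : ℝ → EuclideanSpace ℂ (Fin N))
    (hlam : Differentiable ℝ lam) (hW : Differentiable ℝ W)
    (hnorm : ∀ p : ℝ, ‖W p‖ = 1)
    (heig : ∀ p : ℝ,
      (Complex.exp (-((p : ℂ) * Complex.I)) • A
        + Complex.exp ((p : ℂ) * Complex.I) • Aᴴ + B) *ᵥ (W p)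
      = (lam p : ℂ) • W p) :
    (∀ p : ℝ,
      (@inner ℂ (EuclideanSpace ℂ (Fin N)) _
          ((WithLp.equiv 2 (Fin N → ℂ)).symm (A *ᵥ W p)) (W p)).im = 0 ∧
      0 < (@inner ℂ (EuclideanSpace ℂ (Fin N)) _
          ((WithLp.equiv 2 (Fin N → ℂ)).symm (A *ᵥ W p)) (W p)).re ∧
      deriv lam p = -2 * (@inner ℂ (EuclideanSpace ℂ (Fin N)) _
          ((WithLp.equiv 2 (Fin N → ℂ)).symm (A *ᵥ W p)) (W p)).re * Real.sin p) ∧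
    StrictAntiOn lam (Set.Icc 0 Real.pi) := by
  have hW₀ (p : ℝ) : W p ≠ 0 := norm_ne_zero_iff.1 (by simp [hnorm p])
  have hpos {x} (hx : x ≠ 0) := Complex.pos_iff.1 (inner_toEuclideanLin_self_pos hA hx)
  have heig_operator (p : ℝ) : (2 * Real.cos p) • toEuclideanLin A (W p) +
      toEuclideanLin B (W p) = lam p • W p := by
    refine WithLp.ofLp_injective 2 (Eq.trans ?_ (heig p))
    rw [exp_smul_add_exp_smul_conjTranspose hA.isHermitian, add_mulVec, smul_mulVec]
    simp [toLpLin_apply]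
  obtain ⟨hderiv, hanti⟩ := eigenvalue_branch_posdef_general
    (isSymmetric_toEuclideanLin_iff.2 hA.isHermitian) (fun _ hx ↦ (hpos hx).1)
    (isSymmetric_toEuclideanLin_iff.2 hB.symm) hW.continuous hW₀ heig_operator
  refine ⟨fun p ↦ ⟨(hpos (hW₀ p)).2.symm, (hpos (hW₀ p)).1, ?_⟩, hanti⟩
  simpa [hnorm p, toLpLin_apply] using (hderiv p).deriv
end

section
/- Let N ≥ 1, let A be an N×N Hermitian invertible complex matrix and B an N×N complex matrix with B = B*, and let h(p) = e^{-ip}A + e^{ip}A* + B = (2 cos p)A + B. Then there is no real number c such that c is an eigenvalue of h(p) for every p ∈ [−π, π]; equivalently, there is no c ∈ ℝ with det(h(p) − c·I) = 0 for all p ∈ [−π, π]. -/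
open Matrix Complex

/-!
With `z = e^{ip}`, the matrix `z • (h(p) - c)` equals `A + z • (B - c) + z² • Aᴴ`, whose determinant
is a polynomial in `z`. Its value at `z = 0` is `det A ≠ 0`, so it has only finitely many roots,
whereas `e^{ip}` takes infinitely many values.
-/

section DetPolynomial

variable {n R : Type*} [Fintype n] [DecidableEq n] [CommRing R] [IsDomain R]

theorem finite_setOf_det_map_eval_eq_zero (M : Matrix n n (Polynomial R)) {z₀ : R}
    (h : (M.map (Polynomial.eval z₀)).det ≠ 0) :
    {z : R | (M.map (Polynomial.eval z)).det = 0}.Finite := by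
  have eval_det (z : R) : M.det.eval z = (M.map (Polynomial.eval z)).det :=
    (Polynomial.evalRingHom z).map_det M
  have det_ne_zero : M.det ≠ 0 := fun h₀ ↦ h <| by rw [← eval_det, h₀, Polynomial.eval_zero]
  simpa only [Polynomial.IsRoot.def, eval_det] using Polynomial.finite_setOfPred_isRoot det_ne_zero

theorem finite_setOf_det_quadratic_eq_zero (A₀ A₁ A₂ : Matrix n n R) (h : A₀.det ≠ 0) :
    {z : R | (A₀ + z • A₁ + z ^ 2 • A₂).det = 0}.Finite := by
  let M : Matrix n n (Polynomial R) :=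
    .of fun i j ↦ .C (A₀ i j) + .C (A₁ i j) * .X + .C (A₂ i j) * .X ^ 2
  have map_eval (z : R) : M.map (Polynomial.eval z) = A₀ + z • A₁ + z ^ 2 • A₂ := by
    ext i j
    simp [M, mul_comm z, mul_comm (z ^ 2)]
  have h₀ : (M.map (Polynomial.eval 0)).det ≠ 0 := by
    simpa [map_eval] using h
  simpa only [map_eval] using finite_setOf_det_map_eval_eq_zero M h₀

end DetPolynomial

theorem det_inv_smul_add_smul_add_eq_zero_iff {n K : Type*} [Fintype n] [DecidableEq n] [Field K]
    (A A' B : Matrix n n K) {z : K} (hz : z ≠ 0) :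
    (z⁻¹ • A + z • A' + B).det = 0 ↔ (A + z • B + z ^ 2 • A').det = 0 := by
  have factor : A + z • B + z ^ 2 • A' = z • (z⁻¹ • A + z • A' + B) := by
    rw [smul_add, smul_add, smul_inv_smul₀ hz, smul_smul, ← sq, add_right_comm]
  rw [factor, det_smul, mul_eq_zero, or_iff_right (pow_ne_zero _ hz)]

theorem no_flat_band_of_invertible_general {n : Type*} [Fintype n] [DecidableEq n]
    (A A' B : Matrix n n ℂ) (hA : IsUnit A.det) (c : ℂ) :
    {p ∈ Set.Ioc (-Real.pi) Real.pi |
      ((exp (-((p : ℂ) * I)) • A + exp ((p : ℂ) * I) • A' + B)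
        - c • (1 : Matrix n n ℂ)).det = 0}.Finite := by
  have roots_finite := finite_setOf_det_quadratic_eq_zero A (B - c • 1) A' hA.ne_zero
  have exp_injOn : Set.InjOn (fun p : ℝ ↦ exp (p * I)) (Set.Ioc (-Real.pi) Real.pi) :=
    Circle.coe_injective.comp_injOn (Circle.exp_injOn_Ioc (by linarith))
  refine Set.Finite.of_injOn ?_ (exp_injOn.mono (Set.sep_subset _ _)) roots_finite
  rintro p ⟨-, hdet⟩
  rw [exp_neg, add_sub_assoc] at hdet
  exact (det_inv_smul_add_smul_add_eq_zero_iff A A' _ (exp_ne_zero _)).1 hdet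

/-- If `A` is Hermitian and invertible and `B = Bᴴ`, then there is
no real `c` which is an eigenvalue of `h(p) = e^{-ip}A + e^{ip}Aᴴ + B` for every
`p ∈ [-π, π]`. -/
theorem no_flat_band_of_invertible (N : ℕ) (hN : 1 ≤ N)
    (A B : Matrix (Fin N) (Fin N) ℂ)
    (hA : A.IsHermitian) (hAinv : IsUnit A.det) (hB : B = Bᴴ) :
    ¬ ∃ c : ℝ, ∀ p ∈ Set.Icc (-Real.pi) Real.pi,
      ((Complex.exp (-((p : ℂ) * Complex.I)) • A
          + Complex.exp ((p : ℂ) * Complex.I) • Aᴴ + B)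
        - (c : ℂ) • (1 : Matrix (Fin N) (Fin N) ℂ)).det = 0 := by
  rintro ⟨c, hc⟩
  exact Set.Ioc_infinite (neg_lt_self Real.pi_pos) <|
    (no_flat_band_of_invertible_general A Aᴴ B hAinv c).subset
      fun p hp ↦ ⟨hp, hc p (Set.Ioc_subset_Icc_self hp)⟩
end

section
/- Let N ≥ 1, let A be any N×N complex matrix and B an N×N complex matrix with B = B*. Assume that ⟨(A + A*)w, w⟩ ≠ 0 for every nonzero w ∈ ℂ^N which is an eigenvector of the Hermitian matrix i(A − A*) + B. Let h(p) = e^{-ip}A + e^{ip}A* + B, and suppose λ : ℝ → ℝ and W : ℝ → ℂ^N are differentiable functions such that for all p ∈ ℝ, ‖W(p)‖ = 1 and h(p)W(p) = λ(p)W(p). Then λ'(−π/2) = ⟨(A + A*)W(−π/2), W(−π/2)⟩ ≠ 0. -/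
open Matrix Complex

/-!
If `T q` has eigenvalue `λ q` with eigenvector `W q`, and `T p` is symmetric, then
`⟪(T q - T p) (W q), W p⟫ = (λ q - λ p) ⟪W q, W p⟫`. Dividing by `q - p` and letting `q → p` shows
that `λ` is differentiable at `p` and that `λ' p` is the Rayleigh quotient of `T' p` at `W p` (the
Hellmann–Feynman formula); of `W` only continuity at `p` matters. For
`h q = e^{-iq} A + e^{iq} Aᴴ + B` one has `h' (-π/2) = A + Aᴴ` and `h (-π/2) = i (A - Aᴴ) + B`.
-/

open Filter Topology

theorem tendsto_clm_apply {𝕜 E F α : Type*} [NontriviallyNormedField 𝕜]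
    [SeminormedAddCommGroup E] [NormedSpace 𝕜 E] [SeminormedAddCommGroup F] [NormedSpace 𝕜 F]
    {l : Filter α} {f : α → E →L[𝕜] F} {f₀ : E →L[𝕜] F} {g : α → E} {x : E}
    (hf : Tendsto f l (𝓝 f₀)) (hg : Tendsto g l (𝓝 x)) :
    Tendsto (fun a ↦ f a (g a)) l (𝓝 (f₀ x)) :=
  (isBoundedBilinearMap_apply.continuous.tendsto (f₀, x)).comp (hf.prodMk_nhds hg)

section HellmannFeynman

variable {𝕜 E : Type*} [RCLike 𝕜] [NormedAddCommGroup E] [InnerProductSpace 𝕜 E]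

local notation "⟪" x ", " y "⟫" => inner 𝕜 x y

theorem inner_sub_apply_eigenvector {S T : E →ₗ[𝕜] E} (hT : T.IsSymmetric) {μ ν : ℝ} {x y : E}
    (hx : T x = (μ : 𝕜) • x) (hy : S y = (ν : 𝕜) • y) :
    ⟪(S - T) y, x⟫ = ((ν - μ : ℝ) : 𝕜) * ⟪y, x⟫ := by
  rw [LinearMap.sub_apply, inner_sub_left, hT y x, hx, hy, inner_smul_left, inner_smul_right,
    RCLike.conj_ofReal]
  push_cast
  ring

variable [NormedSpace ℝ E] [IsScalarTower ℝ 𝕜 E]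

theorem re_inner_slope_apply_eigenvector {T : ℝ → E →L[𝕜] E} {lam : ℝ → ℝ} {W : ℝ → E} {p q : ℝ}
    (hT : (T p : E →ₗ[𝕜] E).IsSymmetric) (hp : T p (W p) = (lam p : 𝕜) • W p)
    (hq : T q (W q) = (lam q : 𝕜) • W q) :
    RCLike.re ⟪slope T p q (W q), W p⟫ = slope lam p q * RCLike.re ⟪W q, W p⟫ := by
  have h : ⟪(T q - T p) (W q), W p⟫ = ((lam q - lam p : ℝ) : 𝕜) * ⟪W q, W p⟫ :=
    inner_sub_apply_eigenvector hT hp hq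
  rw [slope, slope, vsub_eq_sub, vsub_eq_sub, _root_.smul_apply, ← algebraMap_smul 𝕜 (q - p)⁻¹,
    inner_smul_left, RCLike.algebraMap_eq_ofReal, RCLike.conj_ofReal, h, RCLike.re_ofReal_mul,
    RCLike.re_ofReal_mul, smul_eq_mul, mul_assoc]

theorem hasDerivAt_eigenvalue {T : ℝ → E →L[𝕜] E} {T' : E →L[𝕜] E} {lam : ℝ → ℝ} {W : ℝ → E}
    {p : ℝ} (hT : HasDerivAt T T' p) (hsymm : (T p : E →ₗ[𝕜] E).IsSymmetric)
    (hW : ContinuousAt W p) (hne : W p ≠ 0) (heig : ∀ᶠ q in 𝓝 p, T q (W q) = (lam q : 𝕜) • W q) :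
    HasDerivAt lam (T'.rayleighQuotient (W p)) p := by
  have hW' : Tendsto W (𝓝[≠] p) (𝓝 (W p)) := hW.tendsto.mono_left nhdsWithin_le_nhds
  have hnum : Tendsto (fun q ↦ RCLike.re ⟪slope T p q (W q), W p⟫) (𝓝[≠] p)
      (𝓝 (RCLike.re ⟪T' (W p), W p⟫)) :=
    (RCLike.continuous_re.tendsto _).comp
      ((tendsto_clm_apply hT.tendsto_slope hW').inner tendsto_const_nhds)
  have hden : Tendsto (fun q ↦ RCLike.re ⟪W q, W p⟫) (𝓝[≠] p) (𝓝 (‖W p‖ ^ 2)) := by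
    rw [← inner_self_eq_norm_sq (𝕜 := 𝕜)]
    exact (RCLike.continuous_re.tendsto _).comp (hW'.inner tendsto_const_nhds)
  have hpos : ‖W p‖ ^ 2 ≠ 0 := pow_ne_zero 2 (norm_ne_zero_iff.mpr hne)
  rw [hasDerivAt_iff_tendsto_slope]
  refine (hnum.div hden hpos).congr' ?_
  filter_upwards [heig.filter_mono nhdsWithin_le_nhds, hden.eventually_ne hpos] with q hq hq0
  exact div_eq_of_eq_mul hq0 (re_inner_slope_apply_eigenvector hsymm heig.self_of_nhds hq)

end HellmannFeynman

theorem toEuclideanCLM_apply_eq_smul_iff {𝕜 n : Type*} [RCLike 𝕜] [Fintype n] [DecidableEq n]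
    {M : Matrix n n 𝕜} {c : 𝕜} {w : EuclideanSpace 𝕜 n} :
    toEuclideanCLM (n := n) (𝕜 := 𝕜) M w = c • w ↔ M *ᵥ w = c • w :=
  (WithLp.ofLp_injective 2).eq_iff.symm

section BlochMatrix

variable {n : Type*}

/-- The Bloch Hamiltonian `h(p) = e^{-ip} A + e^{ip} Aᴴ + B` at quasimomentum `p` of the periodic
block Jacobi operator with hopping block `A` and on-site block `B`. -/
noncomputable def blochMatrix (A B : Matrix n n ℂ) (p : ℝ) : Matrix n n ℂ :=
  exp (-(p * I)) • A + exp (p * I) • Aᴴ + B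

theorem isHermitian_blochMatrix (A : Matrix n n ℂ) {B : Matrix n n ℂ} (hB : B.IsHermitian)
    (p : ℝ) : (blochMatrix A B p).IsHermitian := by
  have hexp : star (exp (-(p * I))) = exp (p * I) := by
    rw [star_def, ← exp_conj, map_neg, map_mul, conj_ofReal, conj_I, mul_neg, neg_neg]
  rw [blochMatrix, ← hexp, ← conjTranspose_smul]
  exact (isHermitian_add_transpose_self _).add hB

theorem exp_neg_pi_div_two_ofReal_mul_I : exp ((-(Real.pi / 2) : ℝ) * I) = -I := by
  rw [← exp_neg_pi_div_two_mul_I]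
  push_cast
  rw [neg_div]

theorem exp_neg_neg_pi_div_two_ofReal_mul_I : exp (-((-(Real.pi / 2) : ℝ) * I)) = I := by
  rw [exp_neg, exp_neg_pi_div_two_ofReal_mul_I, inv_neg, inv_I, neg_neg]

theorem blochMatrix_neg_pi_div_two (A B : Matrix n n ℂ) :
    blochMatrix A B (-(Real.pi / 2)) = I • (A - Aᴴ) + B := by
  rw [blochMatrix, exp_neg_pi_div_two_ofReal_mul_I, exp_neg_neg_pi_div_two_ofReal_mul_I, smul_sub,
    neg_smul, ← sub_eq_add_neg]

variable [Fintype n] [DecidableEq n]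

theorem hasDerivAt_toEuclideanCLM_blochMatrix (A B : Matrix n n ℂ) (p : ℝ) :
    HasDerivAt (fun q ↦ toEuclideanCLM (n := n) (𝕜 := ℂ) (blochMatrix A B q))
      (toEuclideanCLM (n := n) (𝕜 := ℂ) (I • (exp (p * I) • Aᴴ - exp (-(p * I)) • A))) p := by
  have hphase : HasDerivAt (fun q : ℝ ↦ (q : ℂ) * I) I p := by
    simpa using ofRealCLM.hasDerivAt.mul_const I
  simp only [blochMatrix, map_add, map_sub, map_smul]
  refine (((hphase.fun_neg.cexp.smul_const _).fun_add
    (hphase.cexp.smul_const _)).add_const _).congr_deriv ?_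
  module

theorem hasDerivAt_toEuclideanCLM_blochMatrix_neg_pi_div_two (A B : Matrix n n ℂ) :
    HasDerivAt (fun q ↦ toEuclideanCLM (n := n) (𝕜 := ℂ) (blochMatrix A B q))
      (toEuclideanCLM (n := n) (𝕜 := ℂ) (A + Aᴴ)) (-(Real.pi / 2)) := by
  convert hasDerivAt_toEuclideanCLM_blochMatrix A B (-(Real.pi / 2)) using 2
  rw [exp_neg_pi_div_two_ofReal_mul_I, exp_neg_neg_pi_div_two_ofReal_mul_I, smul_sub, smul_smul,
    smul_smul, mul_neg, I_mul_I, neg_neg, one_smul, neg_one_smul, sub_neg_eq_add, add_comm]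

end BlochMatrix

theorem deriv_at_neg_pi_div_two_general {n : Type*} [Fintype n] (A B : Matrix n n ℂ)
    (hB : B.IsHermitian)
    (hAB : ∀ w : EuclideanSpace ℂ n, w ≠ 0 →
      (∃ μ : ℝ, (I • (A - Aᴴ) + B) *ᵥ w = (μ : ℂ) • w) →
      inner ℂ (WithLp.toLp 2 ((A + Aᴴ) *ᵥ w)) w ≠ 0)
    (lam : ℝ → ℝ) (W : ℝ → EuclideanSpace ℂ n)
    (hW : ContinuousAt W (-(Real.pi / 2))) (hnorm : ‖W (-(Real.pi / 2))‖ = 1)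
    (heig : ∀ᶠ p in 𝓝 (-(Real.pi / 2)), blochMatrix A B p *ᵥ W p = (lam p : ℂ) • W p) :
    DifferentiableAt ℝ lam (-(Real.pi / 2)) ∧
    ((deriv lam (-(Real.pi / 2)) : ℝ) : ℂ) =
      inner ℂ (WithLp.toLp 2 ((A + Aᴴ) *ᵥ W (-(Real.pi / 2)))) (W (-(Real.pi / 2))) ∧
    deriv lam (-(Real.pi / 2)) ≠ 0 := by
  classical
  have hne : W (-(Real.pi / 2)) ≠ 0 := norm_ne_zero_iff.mp (hnorm ▸ one_ne_zero)
  have hderiv := hasDerivAt_eigenvalue (hasDerivAt_toEuclideanCLM_blochMatrix_neg_pi_div_two A B)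
    (isSymmetric_toEuclideanLin_iff.mpr (isHermitian_blochMatrix A hB _)) hW hne
    (heig.mono fun _ ↦ toEuclideanCLM_apply_eq_smul_iff.mpr)
  have hformula : ((deriv lam (-(Real.pi / 2)) : ℝ) : ℂ) =
      inner ℂ (WithLp.toLp 2 ((A + Aᴴ) *ᵥ W (-(Real.pi / 2)))) (W (-(Real.pi / 2))) := by
    rw [hderiv.deriv, ContinuousLinearMap.rayleighQuotient, hnorm, one_pow, div_one]
    exact (isSymmetric_toEuclideanLin_iff.mpr
      (isHermitian_add_transpose_self A)).coe_reApplyInnerSelf_apply _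
  have hinner := hAB _ hne ⟨_, blochMatrix_neg_pi_div_two A B ▸ heig.self_of_nhds⟩
  exact ⟨hderiv.differentiableAt, hformula, ofReal_ne_zero.mp (hformula ▸ hinner)⟩

/-- Let `A` be any matrix and `B = Bᴴ` with
`⟨(A + Aᴴ)w, w⟩ ≠ 0` for every nonzero eigenvector `w` of `i(A - Aᴴ) + B`.
Then a differentiable normalized eigenpair branch `(λ(p), W(p))` of
`h(p) = e^{-ip}A + e^{ip}Aᴴ + B` satisfies
`λ'(-π/2) = ⟨(A + Aᴴ)W(-π/2), W(-π/2)⟩ ≠ 0`. -/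
theorem deriv_at_neg_pi_div_two (N : ℕ) (hN : 1 ≤ N)
    (A B : Matrix (Fin N) (Fin N) ℂ) (hB : B = Bᴴ)
    (hAB : ∀ w : EuclideanSpace ℂ (Fin N), w ≠ 0 →
      (∃ μ : ℝ, (Complex.I • (A - Aᴴ) + B) *ᵥ w = (μ : ℂ) • w) →
      @inner ℂ (EuclideanSpace ℂ (Fin N)) _
        ((WithLp.equiv 2 (Fin N → ℂ)).symm ((A + Aᴴ) *ᵥ w)) w ≠ 0)
    (lam : ℝ → ℝ) (W : ℝ → EuclideanSpace ℂ (Fin N))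
    (hlam : Differentiable ℝ lam) (hW : Differentiable ℝ W)
    (hnorm : ∀ p : ℝ, ‖W p‖ = 1)
    (heig : ∀ p : ℝ,
      (Complex.exp (-((p : ℂ) * Complex.I)) • A
        + Complex.exp ((p : ℂ) * Complex.I) • Aᴴ + B) *ᵥ (W p)
      = (lam p : ℂ) • W p) :
    ((deriv lam (-(Real.pi / 2)) : ℝ) : ℂ)
      = @inner ℂ (EuclideanSpace ℂ (Fin N)) _
          ((WithLp.equiv 2 (Fin N → ℂ)).symm ((A + Aᴴ) *ᵥ W (-(Real.pi / 2))))
          (W (-(Real.pi / 2))) ∧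
    deriv lam (-(Real.pi / 2)) ≠ 0 := by
  exact (deriv_at_neg_pi_div_two_general A B hB.symm hAB lam W hW.continuous.continuousAt (hnorm _)
    (.of_forall heig)).2
end

section
/- Let N ≥ 3, let a₁, …, a_N > 0 and b₁, …, b_N ∈ ℝ, and let h(p) be the periodic N×N Hermitian matrix with corner phases. Then: (i) for every p ∈ ℝ and every eigenvalue λ of h(p), the eigenspace ker(h(p) − λI) has dimension at most 2; (ii) if p ∈ (0, π), then every eigenvalue of h(p) is simple, i.e. dim ker(h(p) − λI) = 1 for every eigenvalue λ of h(p). -/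
/-!
Number the entries of a vector from `0`. For a kernel vector `v` of `h(p) - μ`, the entry
`v (k + 1)` is recovered from row `k` once `v 0, …, v k` and `v (N - 1)` are known. So `v` is
determined by its boundary entries `v 0` and `v (N - 1)`, and the eigenspace embeds into `ℂ²`.

When `sin p ≠ 0`, `h(p)` is not symmetric, and its antisymmetric part `h(p) - h(p)ᵀ` lives on the
two corners. Since `u ⬝ᵥ (h(p) - h(p)ᵀ) *ᵥ v = 0` for `u`, `v` in the same eigenspace (`h(p)` and
`h(p)ᵀ` act on either side by the same scalar), the boundary pairs of `u` and `v` are proportional,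
and the image in `ℂ²` is at most a line.
-/

open Matrix Complex

/-- The periodic `N×N` Hermitian matrix with corner phases: real symmetric
tridiagonal part with diagonal `b 0, …, b (N-1)`, off-diagonal entries
`a 0, …, a (N-2)`, and corners `(h p)₁,N = a_N e^{ip}`, `(h p)_{N,1} = a_N e^{-ip}`
(with `a_N = a (N-1)` in 0-based notation). -/
noncomputable def hper (N : ℕ) (a b : ℕ → ℝ) (p : ℝ) : Matrix (Fin N) (Fin N) ℂ :=
  Matrix.of fun i j =>
    if (i : ℕ) = (j : ℕ) then (b i : ℂ)
    else if (i : ℕ) + 1 = (j : ℕ) then (a i : ℂ)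
    else if (j : ℕ) + 1 = (i : ℕ) then (a j : ℂ)
    else if (i : ℕ) = 0 ∧ (j : ℕ) + 1 = N then
      (a (N - 1) : ℂ) * Complex.exp ((p : ℂ) * Complex.I)
    else if (j : ℕ) = 0 ∧ (i : ℕ) + 1 = N then
      (a (N - 1) : ℂ) * Complex.exp (-((p : ℂ) * Complex.I))
    else 0

section Functionals

variable {R V : Type*} [Ring R] [StrongRankCondition R] [AddCommGroup V] [Module R V]
  {f g : V →ₗ[R] R}

theorem finrank_le_two_of_forall_eq_zero (hfg : ∀ v, f v = 0 → g v = 0 → v = 0) :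
    Module.finrank R V ≤ 2 := by
  have hinj : Function.Injective (f.prod g) := by
    refine (injective_iff_map_eq_zero _).mpr fun v hv => ?_
    obtain ⟨hf, hg⟩ := Prod.ext_iff.mp hv
    exact hfg v hf hg
  simpa using LinearMap.finrank_le_finrank_of_injective hinj

theorem finrank_le_one_of_mul_eq_mul [NoZeroDivisors R]
    (hfg : ∀ v, f v = 0 → g v = 0 → v = 0) (hmul : ∀ u v, f u * g v = f v * g u) :
    Module.finrank R V ≤ 1 := by
  suffices Function.Injective f ∨ Function.Injective g by
    rcases this with hinj | hinj <;>
      simpa using LinearMap.finrank_le_finrank_of_injective hinj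
  simp only [injective_iff_map_eq_zero]
  by_cases hf : ∃ u, f u ≠ 0
  · obtain ⟨u, hu⟩ := hf
    refine Or.inl fun v hv => hfg v hv ?_
    simpa [hv, hu] using hmul u v
  · push Not at hf
    exact Or.inr fun v hv => hfg v (hf v) hv

end Functionals

section Wronskian

variable {ι R : Type*} [Fintype ι] [CommRing R] {M : Matrix ι ι R} {u v : ι → R}

theorem dotProduct_sub_transpose_mulVec_eq_zero (hu : M *ᵥ u = 0) (hv : M *ᵥ v = 0) :
    u ⬝ᵥ (M - Mᵀ) *ᵥ v = 0 := by
  rw [sub_mulVec, hv, zero_sub, dotProduct_neg, dotProduct_mulVec, vecMul_transpose, hu,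
    zero_dotProduct, neg_zero]

theorem mul_eq_mul_of_sub_transpose_eq_single_sub_single [DecidableEq ι] [NoZeroDivisors R]
    {i j : ι} {c : R} (hc : c ≠ 0) (hM : M - Mᵀ = single i j c - single j i c)
    (hu : M *ᵥ u = 0) (hv : M *ᵥ v = 0) : u i * v j = v i * u j := by
  have hW : u ⬝ᵥ (single i j c - single j i c) *ᵥ v = 0 :=
    hM ▸ dotProduct_sub_transpose_mulVec_eq_zero hu hv
  have hW' : u i * (c * v j) - u j * (c * v i) = 0 := by
    simpa [sub_mulVec, single_mulVec, dotProduct, Function.update_apply, mul_sub] using hW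
  refine sub_eq_zero.mp ((mul_eq_zero.mp ?_).resolve_left hc)
  linear_combination hW'

end Wronskian

/-- Lower Hessenberg matrices with nowhere vanishing superdiagonal, both conditions being imposed
outside the last column only. The free last column accommodates the corner entry of a periodic
tridiagonal matrix. -/
structure IsBorderedHessenberg {R : Type*} [Zero R] {n : ℕ}
    (M : Matrix (Fin (n + 1)) (Fin (n + 1)) R) : Prop where
  superdiag_ne_zero : ∀ i j : Fin (n + 1), (i : ℕ) + 1 = j → j ≠ Fin.last n → M i j ≠ 0
  eq_zero_of_lt : ∀ i j : Fin (n + 1), (i : ℕ) + 1 < j → j ≠ Fin.last n → M i j = 0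

namespace IsBorderedHessenberg

theorem sub_smul_one {R : Type*} [Ring R] {n : ℕ} {M : Matrix (Fin (n + 1)) (Fin (n + 1)) R}
    (hM : IsBorderedHessenberg M) (μ : R) : IsBorderedHessenberg (M - μ • 1) := by
  have hoff (i j : Fin (n + 1)) (hij : (i : ℕ) < j) : (M - μ • 1) i j = M i j := by
    simp [one_apply_ne (Fin.ne_of_lt hij)]
  constructor
  · intro i j hij hj
    rw [hoff i j (by omega)]
    exact hM.superdiag_ne_zero i j hij hj
  · intro i j hij hj
    rw [hoff i j (by omega)]
    exact hM.eq_zero_of_lt i j hij hj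

theorem eq_zero_of_mulVec_eq_zero {R : Type*} [Semiring R] [NoZeroDivisors R] {n : ℕ}
    {M : Matrix (Fin (n + 1)) (Fin (n + 1)) R} (hM : IsBorderedHessenberg M)
    {v : Fin (n + 1) → R} (hv : M *ᵥ v = 0) (hzero : v 0 = 0) (hlast : v (Fin.last n) = 0) :
    v = 0 := by
  funext k
  induction k using WellFoundedLT.induction with
  | ind k ih =>
    obtain rfl | hk := eq_or_ne k (Fin.last n)
    · exact hlast
    obtain rfl | ⟨i, rfl⟩ := k.eq_zero_or_eq_succ
    · exact hzero
    have hrow : (M *ᵥ v) i.castSucc = M i.castSucc i.succ * v i.succ := by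
      refine Fintype.sum_eq_single i.succ fun j hj => ?_
      rcases hj.lt_or_gt with hlt | hgt
      · rw [ih j hlt, Pi.zero_apply, mul_zero]
      · obtain rfl | hj' := eq_or_ne j (Fin.last n)
        · rw [hlast, mul_zero]
        · have hij : M i.castSucc j = 0 := hM.eq_zero_of_lt _ _ hgt hj'
          simp only [hij, zero_mul]
    rw [hv, Pi.zero_apply, eq_comm] at hrow
    exact (mul_eq_zero.mp hrow).resolve_left (hM.superdiag_ne_zero _ _ (by simp) hk)

variable {R : Type*} [CommRing R] [IsDomain R] {n : ℕ}
  {M : Matrix (Fin (n + 1)) (Fin (n + 1)) R}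

theorem finrank_ker_le_two (hM : IsBorderedHessenberg M) :
    Module.finrank R (LinearMap.ker M.mulVecLin) ≤ 2 :=
  finrank_le_two_of_forall_eq_zero
    (f := LinearMap.proj 0 ∘ₗ Submodule.subtype _)
    (g := LinearMap.proj (Fin.last n) ∘ₗ Submodule.subtype _)
    fun v hzero hlast => Subtype.ext (hM.eq_zero_of_mulVec_eq_zero v.2 hzero hlast)

theorem finrank_ker_le_one (hM : IsBorderedHessenberg M) {c : R} (hc : c ≠ 0)
    (hskew : M - Mᵀ = single 0 (Fin.last n) c - single (Fin.last n) 0 c) :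
    Module.finrank R (LinearMap.ker M.mulVecLin) ≤ 1 :=
  finrank_le_one_of_mul_eq_mul
    (f := LinearMap.proj 0 ∘ₗ Submodule.subtype _)
    (g := LinearMap.proj (Fin.last n) ∘ₗ Submodule.subtype _)
    (fun v hzero hlast => Subtype.ext (hM.eq_zero_of_mulVec_eq_zero v.2 hzero hlast))
    fun u v => mul_eq_mul_of_sub_transpose_eq_single_sub_single hc hskew u.2 v.2

end IsBorderedHessenberg

theorem isBorderedHessenberg_hper {n : ℕ} {a : ℕ → ℝ} (ha : ∀ k, k + 1 < n → a k ≠ 0)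
    (b : ℕ → ℝ) (p : ℝ) : IsBorderedHessenberg (hper (n + 1) a b p) where
  superdiag_ne_zero i j hij hj := by
    have hi : (i : ℕ) + 1 < n := hij ▸ j.val_lt_last hj
    simpa [hper, ← hij] using ha i hi
  eq_zero_of_lt i j hij hj := by
    have hjn : (j : ℕ) < n := j.val_lt_last hj
    simp only [hper, of_apply]
    split_ifs <;> first | omega | rfl

theorem hper_sub_transpose {n : ℕ} (hn : 2 ≤ n) (a b : ℕ → ℝ) (p : ℝ) :
    hper (n + 1) a b p - (hper (n + 1) a b p)ᵀ =
      single 0 (Fin.last n) (a n * (2 * Real.sin p * I)) -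
        single (Fin.last n) 0 (a n * (2 * Real.sin p * I)) := by
  have hexp : 2 * (Real.sin p : ℂ) * I = exp (p * I) - exp (-(p * I)) := by
    rw [ofReal_sin, two_sin, mul_assoc, I_mul_I, neg_mul]
    ring
  rw [hexp]
  ext i j
  simp only [hper, Matrix.sub_apply, transpose_apply, of_apply, single_apply, Fin.ext_iff,
    Fin.val_zero, Fin.val_last, add_tsub_cancel_right]
  split_ifs <;> first | omega | grind

theorem hper_eigenspaces_general (N : ℕ) (hN : 3 ≤ N) (a b : ℕ → ℝ)
    (ha : ∀ k, k + 2 < N → a k ≠ 0) :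
    (∀ (p : ℝ) (μ : ℂ),
      Module.finrank ℂ
        (LinearMap.ker (hper N a b p - μ • (1 : Matrix (Fin N) (Fin N) ℂ)).mulVecLin)
        ≤ 2) ∧
    (a (N - 1) ≠ 0 → ∀ p : ℝ, Real.sin p ≠ 0 → ∀ μ : ℂ,
      (∃ v : Fin N → ℂ, v ≠ 0 ∧ (hper N a b p) *ᵥ v = μ • v) →
      Module.finrank ℂ
        (LinearMap.ker (hper N a b p - μ • (1 : Matrix (Fin N) (Fin N) ℂ)).mulVecLin)
        = 1) := by
  obtain ⟨n, rfl⟩ : ∃ n, N = n + 1 := ⟨N - 1, by omega⟩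
  have hM (p : ℝ) (μ : ℂ) : IsBorderedHessenberg (hper (n + 1) a b p - μ • 1) :=
    (isBorderedHessenberg_hper (fun k hk => ha k (by omega)) b p).sub_smul_one μ
  refine ⟨fun p μ => (hM p μ).finrank_ker_le_two, ?_⟩
  rintro han p hp μ ⟨v, hv, hvμ⟩
  have hcorner : (a n * (2 * Real.sin p * I) : ℂ) ≠ 0 := by
    simpa [-ofReal_sin] using And.intro han hp
  have hskew := hper_sub_transpose (n := n) (by omega) a b p
  apply le_antisymm
  · refine (hM p μ).finrank_ker_le_one hcorner ?_
    rw [← hskew]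
    simp [transpose_sub]
  · refine Submodule.one_le_finrank_iff.mpr ((Submodule.ne_bot_iff _).mpr ⟨v, ?_, hv⟩)
    simp [hvμ]

/-- (i) Every eigenspace of `h(p)` has dimension at most `2`;
(ii) for `p ∈ (0, π)` every eigenvalue of `h(p)` is simple. -/
theorem hper_eigenspaces (N : ℕ) (hN : 3 ≤ N) (a b : ℕ → ℝ)
    (ha : ∀ k < N, 0 < a k) :
    (∀ (p : ℝ) (μ : ℂ),
      (∃ v : Fin N → ℂ, v ≠ 0 ∧ (hper N a b p) *ᵥ v = μ • v) →
      Module.finrank ℂ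
        (LinearMap.ker (hper N a b p - μ • (1 : Matrix (Fin N) (Fin N) ℂ)).mulVecLin)
        ≤ 2) ∧
    (∀ p ∈ Set.Ioo (0 : ℝ) Real.pi, ∀ μ : ℂ,
      (∃ v : Fin N → ℂ, v ≠ 0 ∧ (hper N a b p) *ᵥ v = μ • v) →
      Module.finrank ℂ
        (LinearMap.ker (hper N a b p - μ • (1 : Matrix (Fin N) (Fin N) ℂ)).mulVecLin)
        = 1) := by
  obtain ⟨htwo, hone⟩ :=
    hper_eigenspaces_general N hN a b fun k hk => (ha k (by omega)).ne'
  exact ⟨fun p μ _ => htwo p μ, fun p hp =>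
    hone (ha (N - 1) (by omega)).ne' p (Real.sin_pos_of_mem_Ioo hp).ne'⟩
end

section
/- Let N ≥ 3, let a₁, …, a_N > 0 and b₁, …, b_N ∈ ℝ, and let h(p) be the periodic N×N Hermitian matrix with corner phases. Suppose λ : ℝ → ℝ and W : ℝ → ℂ^N are differentiable functions such that for all p ∈ ℝ, ‖W(p)‖ = 1 and h(p)W(p) = λ(p)W(p). Then for every p ∈ (0, π), λ'(p) = −2 a_N·Im(e^{ip}·conj(W₁(p))·W_N(p)) and λ'(p) ≠ 0. -/
/-!
For a family of symmetric operators, the derivative of an eigenvalue is the quadratic form of the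
differentiated operator at the eigenvector (Hellmann–Feynman). Only the two corner entries of `h(p)`
depend on `p`, and they contribute `-2 a_N Im (e^{ip} conj W₁ W_N)`.

Suppose this imaginary part vanishes at an eigenvector `v`. The first row of the eigenvalue equation
makes `conj v₁ v₂` real, so `v₁` and `v₂` become real after multiplying `v` by a nonzero constant,
and the three-term recursion makes all of `v` real. In the first and last rows the only terms that
can fail to be real are then `a_N e^{ip} v_N` and `a_N e^{-ip} v₁`, so `sin p ≠ 0` forces
`v_N = v₁ = 0`; the first row gives `v₂ = 0`, and the recursion `v = 0`.
-/

open Matrix Complex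

open scoped ComplexConjugate InnerProductSpace Topology

section HellmannFeynman

variable {𝕜 E : Type*} [RCLike 𝕜] [NormedAddCommGroup E] [InnerProductSpace 𝕜 E]

lemma re_inner_apply_sub_smul_eq {T : E →ₗ[𝕜] E} (hT : T.IsSymmetric) {m : ℝ} {w : E}
    (hw : T w = (m : 𝕜) • w) (l : ℝ) (v : E) :
    RCLike.re ⟪w, T v - (l : 𝕜) • v⟫_𝕜 = (m - l) * RCLike.re ⟪w, v⟫_𝕜 := by
  rw [inner_sub_right, ← hT w v, hw, inner_smul_left, inner_smul_right, RCLike.conj_ofReal,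
    ← sub_mul, ← RCLike.ofReal_sub, RCLike.re_ofReal_mul]

/- Pairing with the moving eigenvector `v q` leaves only `T q` applied to the fixed vector `v p` to
differentiate, so that `v` need only be continuous. -/
theorem hasDerivAt_eigenvalue_s9 [NormedSpace ℝ E] [IsScalarTower ℝ 𝕜 E] {T : ℝ → E →ₗ[𝕜] E}
    {lam : ℝ → ℝ} {v : ℝ → E} {w : E} {p : ℝ} (hT : ∀ᶠ q in 𝓝 p, (T q).IsSymmetric)
    (hw : HasDerivAt (fun q => T q (v p)) w p) (hv : ContinuousAt v p) (hvp : v p ≠ 0)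
    (heig : ∀ᶠ q in 𝓝 p, T q (v q) = (lam q : 𝕜) • v q) :
    HasDerivAt lam (RCLike.re ⟪v p, w⟫_𝕜 / ‖v p‖ ^ 2) p := by
  have overlap : Filter.Tendsto (fun q => RCLike.re ⟪v q, v p⟫_𝕜) (𝓝 p) (𝓝 (‖v p‖ ^ 2)) := by
    rw [norm_sq_eq_re_inner (𝕜 := 𝕜)]
    exact (RCLike.continuous_re.tendsto ⟪v p, v p⟫_𝕜).comp (hv.inner continuousAt_const)
  have overlap_ne : ∀ᶠ q in 𝓝 p, RCLike.re ⟪v q, v p⟫_𝕜 ≠ 0 :=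
    overlap.eventually_ne (by simpa using hvp)
  rw [hasDerivAt_iff_tendsto_slope] at hw ⊢
  have numerator : Filter.Tendsto
      (fun q => RCLike.re ⟪v q, slope (fun q => T q (v p)) p q⟫_𝕜) (𝓝[≠] p)
      (𝓝 (RCLike.re ⟪v p, w⟫_𝕜)) :=
    (RCLike.continuous_re.tendsto ⟪v p, w⟫_𝕜).comp
      ((hv.tendsto.mono_left nhdsWithin_le_nhds).inner hw)
  refine (numerator.div (overlap.mono_left nhdsWithin_le_nhds) (by simpa using hvp)).congr' ?_
  filter_upwards [nhdsWithin_le_nhds hT, nhdsWithin_le_nhds heig, nhdsWithin_le_nhds overlap_ne]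
    with q hTq hq hne
  rw [Pi.div_apply, div_eq_iff hne, slope_def_field, slope_def_module, heig.self_of_nhds,
    inner_smul_right_eq_smul, RCLike.smul_re, re_inner_apply_sub_smul_eq hTq hq, inv_mul_eq_div,
    div_mul_eq_mul_div]

end HellmannFeynman

section JacobiRecursion

variable {K M M' : Type*} [DivisionRing K] [AddCommGroup M] [Module K M] [AddCommGroup M']
  [Module K M'] {N : ℕ} {a b : ℕ → K} {l : K} {f : Fin N → M}

/-- The interior rows of the eigenvalue equation `J f = l f` of a Jacobi matrix `J` with diagonal
`b` and off-diagonal `a`; nothing is asked of `f` in the first and the last row, where the boundary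
conditions enter. The values of `f` may lie in any vector space, so that real-linear maps such as
`Complex.im` can be applied to complex solutions. -/
def IsJacobiSolution (a b : ℕ → K) (l : K) (f : Fin N → M) : Prop :=
  ∀ k (hk : k + 2 < N), a k • f ⟨k, by omega⟩ + b (k + 1) • f ⟨k + 1, by omega⟩
    + a (k + 1) • f ⟨k + 2, hk⟩ = l • f ⟨k + 1, by omega⟩

namespace IsJacobiSolution

lemma map (hf : IsJacobiSolution a b l f) (L : M →ₗ[K] M') :
    IsJacobiSolution a b l (fun i => L (f i)) := fun k hk => by
  simpa only [map_add, map_smul] using congrArg L (hf k hk)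

lemma eq_zero (hf : IsJacobiSolution a b l f) (ha : ∀ k < N, a k ≠ 0)
    (h0 : ∀ h, f ⟨0, h⟩ = 0) (h1 : ∀ h, f ⟨1, h⟩ = 0) : f = 0 := by
  suffices h : ∀ k (hk : k < N), f ⟨k, hk⟩ = 0 from funext fun i => h i i.isLt
  intro k
  induction k using Nat.twoStepInduction with
  | zero => exact h0
  | one => exact h1
  | more k ih0 ih1 =>
    intro hk
    have recursion := hf k hk
    rw [ih0, ih1] at recursion
    simpa [ha (k + 1) (by omega)] using recursion

end IsJacobiSolution

end JacobiRecursion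

lemma exists_ne_zero_im_mul_eq_zero {z w : ℂ} (h : (conj z * w).im = 0) :
    ∃ c ≠ 0, (c * z).im = 0 ∧ (c * w).im = 0 := by
  rcases eq_or_ne z 0 with rfl | hz
  · rcases eq_or_ne w 0 with rfl | hw
    · exact ⟨1, one_ne_zero, by simp, by simp⟩
    · exact ⟨conj w, by simpa using hw, by simp, by simp [mul_comm]⟩
  · exact ⟨conj z, by simpa using hz, by simp [mul_comm], h⟩

lemma eq_zero_of_im_eq_zero_of_im_exp_mul_eq_zero {z : ℂ} {p : ℝ} (hp : Real.sin p ≠ 0)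
    (hz : z.im = 0) (h : (exp (p * I) * z).im = 0) : z = 0 := by
  rw [mul_im, hz, exp_ofReal_mul_I_im, mul_zero, zero_add] at h
  exact Complex.ext ((mul_eq_zero.mp h).resolve_left hp) hz

section PeriodicJacobi

variable {N : ℕ} (a b : ℕ → ℝ) (p : ℝ)

lemma isHermitian_hper : (hper N a b p).IsHermitian := by
  ext i j
  simp only [hper, conjTranspose_apply, of_apply]
  split_ifs <;> first | omega | simp [← exp_conj] <;> grind

lemma hper_mulVec_first (hN : 2 < N) (v : Fin N → ℂ) :
    (hper N a b p *ᵥ v) ⟨0, by omega⟩ =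
      b 0 * v ⟨0, by omega⟩ + a 0 * v ⟨1, by omega⟩
        + a (N - 1) * exp (p * I) * v ⟨N - 1, by omega⟩ := by
  have row : hper N a b p ⟨0, by omega⟩ = Pi.single ⟨0, by omega⟩ (b 0 : ℂ)
      + Pi.single ⟨1, by omega⟩ (a 0 : ℂ)
      + Pi.single ⟨N - 1, by omega⟩ (a (N - 1) * exp (p * I)) := by
    ext j
    simp only [hper, of_apply, Pi.add_apply, Pi.single_apply, Fin.ext_iff]
    split_ifs <;> first | omega | grind
  exact (congrArg (· ⬝ᵥ v) row).trans (by simp [add_dotProduct])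

lemma hper_mulVec_interior (v : Fin N → ℂ) (k : ℕ) (hk : k + 2 < N) :
    (hper N a b p *ᵥ v) ⟨k + 1, by omega⟩ =
      a k * v ⟨k, by omega⟩ + b (k + 1) * v ⟨k + 1, by omega⟩ + a (k + 1) * v ⟨k + 2, hk⟩ := by
  have row : hper N a b p ⟨k + 1, by omega⟩ = Pi.single ⟨k, by omega⟩ (a k : ℂ)
      + Pi.single ⟨k + 1, by omega⟩ (b (k + 1) : ℂ)
      + Pi.single ⟨k + 2, hk⟩ (a (k + 1) : ℂ) := by
    ext j
    simp only [hper, of_apply, Pi.add_apply, Pi.single_apply, Fin.ext_iff]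
    split_ifs <;> first | omega | grind
  exact (congrArg (· ⬝ᵥ v) row).trans (by simp [add_dotProduct])

lemma hper_mulVec_last (hN : 2 < N) (v : Fin N → ℂ) :
    (hper N a b p *ᵥ v) ⟨N - 1, by omega⟩ =
      a (N - 1) * exp (-(p * I)) * v ⟨0, by omega⟩
        + a (N - 2) * v ⟨N - 2, by omega⟩ + b (N - 1) * v ⟨N - 1, by omega⟩ := by
  have row : hper N a b p ⟨N - 1, by omega⟩ =
      Pi.single ⟨0, by omega⟩ (a (N - 1) * exp (-(p * I)))
      + Pi.single ⟨N - 2, by omega⟩ (a (N - 2) : ℂ)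
      + Pi.single ⟨N - 1, by omega⟩ (b (N - 1) : ℂ) := by
    ext j
    simp only [hper, of_apply, Pi.add_apply, Pi.single_apply, Fin.ext_iff]
    split_ifs <;> first | omega | grind
  exact (congrArg (· ⬝ᵥ v) row).trans (by simp [add_dotProduct])

lemma hasDerivAt_hper_mulVec (hN : 2 < N) (v : Fin N → ℂ) :
    HasDerivAt (fun q => hper N a b q *ᵥ v)
      (Pi.single ⟨0, by omega⟩ (a (N - 1) * (exp (p * I) * I) * v ⟨N - 1, by omega⟩)
        + Pi.single ⟨N - 1, by omega⟩
          (a (N - 1) * (exp (-(p * I)) * -I) * v ⟨0, by omega⟩)) p := by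
  have phase : HasDerivAt (fun q : ℝ => (q : ℂ) * I) I p := by
    simpa using (hasDerivAt_id p).ofReal_comp.mul_const I
  have first_ne_last : (⟨0, by omega⟩ : Fin N) ≠ ⟨N - 1, by omega⟩ := by
    simp only [ne_eq, Fin.mk.injEq]; omega
  refine hasDerivAt_pi.mpr fun ⟨i, hi⟩ => ?_
  obtain rfl | rfl | ⟨k, hk, rfl⟩ : i = 0 ∨ i = N - 1 ∨ ∃ k, k + 2 < N ∧ i = k + 1 := by
    by_cases h : i = 0 ∨ i = N - 1
    · tauto
    · exact .inr (.inr ⟨i - 1, by omega, by omega⟩)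
  · simp only [hper_mulVec_first a b _ hN]
    simpa [first_ne_last] using
      ((phase.cexp.const_mul (a (N - 1) : ℂ)).mul_const (v ⟨N - 1, by omega⟩)).const_add
        (b 0 * v ⟨0, by omega⟩ + a 0 * v ⟨1, by omega⟩)
  · simp only [hper_mulVec_last a b _ hN, add_assoc]
    simpa [first_ne_last.symm] using
      ((phase.neg.cexp.const_mul (a (N - 1) : ℂ)).mul_const (v ⟨0, by omega⟩)).add_const
        (a (N - 2) * v ⟨N - 2, by omega⟩ + b (N - 1) * v ⟨N - 1, by omega⟩)
  · simp only [hper_mulVec_interior a b _ _ _ hk]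
    have h : k + 1 ≠ N - 1 := by omega
    simpa [Pi.single_apply, h] using hasDerivAt_const _ _

lemma hasDerivAt_toEuclideanLin_hper (hN : 2 < N) (v : EuclideanSpace ℂ (Fin N)) :
    HasDerivAt (fun q => toEuclideanLin (hper N a b q) v)
      (EuclideanSpace.single ⟨0, by omega⟩ (a (N - 1) * (exp (p * I) * I) * v ⟨N - 1, by omega⟩)
        + EuclideanSpace.single ⟨N - 1, by omega⟩
          (a (N - 1) * (exp (-(p * I)) * -I) * v ⟨0, by omega⟩)) p :=
  (PiLp.continuousLinearEquiv 2 ℝ (fun _ : Fin N => ℂ)).symm.hasFDerivAt.comp_hasDerivAt p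
    (hasDerivAt_hper_mulVec a b p hN v)

variable {a b p} {l : ℝ} {v : Fin N → ℂ}

lemma isJacobiSolution_of_hper_mulVec_eq (h : hper N a b p *ᵥ v = (l : ℂ) • v) :
    IsJacobiSolution a b l v := fun k hk => by
  simpa [hper_mulVec_interior a b p v k hk] using congrFun h ⟨k + 1, by omega⟩

lemma im_conj_mul_of_hper_mulVec_eq (hN : 2 < N) (h : hper N a b p *ᵥ v = (l : ℂ) • v) :
    a 0 * (conj (v ⟨0, by omega⟩) * v ⟨1, by omega⟩).im =
      -(a (N - 1) * (exp (p * I) * conj (v ⟨0, by omega⟩) * v ⟨N - 1, by omega⟩).im) := by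
  set v₀ := v ⟨0, by omega⟩
  have im_mul_ofReal_mul (r : ℝ) (z : ℂ) : (conj v₀ * (r * z)).im = r * (conj v₀ * z).im := by
    rw [mul_left_comm, im_ofReal_mul]
  have im_conj_mul_self : (conj v₀ * v₀).im = 0 := by rw [← normSq_eq_conj_mul_self, ofReal_im]
  have current := congrArg (fun z => (conj v₀ * z).im)
    ((hper_mulVec_first a b p hN v).symm.trans (congrFun h ⟨0, by omega⟩))
  simp only [Pi.smul_apply, smul_eq_mul, mul_add, add_im, mul_assoc, im_mul_ofReal_mul] at current
  rw [im_conj_mul_self, mul_zero, mul_zero, zero_add, mul_left_comm] at current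
  rw [mul_assoc]
  exact eq_neg_of_add_eq_zero_left current

lemma eq_zero_of_hper_mulVec_eq_of_im_eq_zero (hN : 2 < N) (ha : ∀ k < N, a k ≠ 0)
    (hp : Real.sin p ≠ 0) (h : hper N a b p *ᵥ v = (l : ℂ) • v) (hreal : ∀ i, (v i).im = 0) :
    v = 0 := by
  have first := (hper_mulVec_first a b p hN v).symm.trans (congrFun h ⟨0, by omega⟩)
  have last := (hper_mulVec_last a b p hN v).symm.trans (congrFun h ⟨N - 1, by omega⟩)
  have v_last : v ⟨N - 1, by omega⟩ = 0 := by
    refine eq_zero_of_im_eq_zero_of_im_exp_mul_eq_zero hp (hreal _) ?_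
    have := congrArg im first
    simpa [hreal, mul_assoc, im_ofReal_mul, ha (N - 1) (by omega), -mul_im] using this
  have v_first : v ⟨0, by omega⟩ = 0 := by
    refine eq_zero_of_im_eq_zero_of_im_exp_mul_eq_zero (p := -p) (by simpa using hp) (hreal _) ?_
    have := congrArg im last
    simpa [hreal, mul_assoc, im_ofReal_mul, ha (N - 1) (by omega), -mul_im] using this
  refine (isJacobiSolution_of_hper_mulVec_eq h).eq_zero ha (fun _ => v_first) fun _ => ?_
  simpa [v_first, v_last, ha 0 (by omega)] using first

theorem im_corner_ne_zero_of_hper_mulVec_eq (hN : 2 < N) (ha : ∀ k < N, a k ≠ 0)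
    (hp : Real.sin p ≠ 0) (h : hper N a b p *ᵥ v = (l : ℂ) • v) (hv : v ≠ 0) :
    (exp (p * I) * conj (v ⟨0, by omega⟩) * v ⟨N - 1, by omega⟩).im ≠ 0 := by
  intro hcorner
  have hcurrent : (conj (v ⟨0, by omega⟩) * v ⟨1, by omega⟩).im = 0 := by
    simpa [hcorner, ha 0 (by omega), -mul_im] using im_conj_mul_of_hper_mulVec_eq hN h
  obtain ⟨c, hc, h0, h1⟩ := exists_ne_zero_im_mul_eq_zero hcurrent
  have im_eq_zero : (fun i => (c * v i).im) = 0 :=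
    ((isJacobiSolution_of_hper_mulVec_eq h).map (imLm ∘ₗ LinearMap.mulLeft ℝ c)).eq_zero ha
      (fun _ => h0) fun _ => h1
  have eigen : hper N a b p *ᵥ (c • v) = (l : ℂ) • c • v := by rw [mulVec_smul, h, smul_comm]
  have : c • v = 0 :=
    eq_zero_of_hper_mulVec_eq_of_im_eq_zero hN ha hp eigen (congrFun im_eq_zero)
  exact hv ((smul_eq_zero.mp this).resolve_left hc)

end PeriodicJacobi

theorem hasDerivAt_hper_eigenvalue {N : ℕ} (hN : 2 < N) {a b : ℕ → ℝ} {lam : ℝ → ℝ}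
    {W : ℝ → EuclideanSpace ℂ (Fin N)} {p : ℝ} (hW : ContinuousAt W p) (hWp : W p ≠ 0)
    (heig : ∀ᶠ q in 𝓝 p, hper N a b q *ᵥ W q = (lam q : ℂ) • W q) :
    HasDerivAt lam (-2 * a (N - 1) * (exp (p * I) * conj (W p ⟨0, by omega⟩)
      * W p ⟨N - 1, by omega⟩).im / ‖W p‖ ^ 2) p := by
  have symmetric (q : ℝ) : (toEuclideanLin (hper N a b q)).IsSymmetric :=
    isSymmetric_toEuclideanLin_iff.mpr (isHermitian_hper a b q)
  have hellmannFeynman := hasDerivAt_eigenvalue_s9 (.of_forall symmetric)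
    (hasDerivAt_toEuclideanLin_hper a b p hN (W p)) hW hWp
    (heig.mono fun q hq => congrArg (WithLp.toLp 2) hq)
  convert hellmannFeynman using 2
  set corner := exp (p * I) * conj (W p ⟨0, by omega⟩) * W p ⟨N - 1, by omega⟩ with corner_def
  have conj_phase : conj (exp (p * I)) = exp (-(p * I)) := by simp [← exp_conj]
  symm
  rw [RCLike.re_to_complex, ← ofReal_re (-2 * a (N - 1) * corner.im)]
  congr 1
  calc
    _ = a (N - 1) * I * (corner - conj corner) := by
      simp only [inner_add_right, EuclideanSpace.inner_single_right, corner_def, map_mul,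
        conj_conj, conj_phase]
      ring
    _ = ((-2 * a (N - 1) * corner.im : ℝ) : ℂ) := by
      rw [sub_conj]
      push_cast
      linear_combination 2 * a (N - 1) * corner.im * I_mul_I

theorem hper_eigenvalue_deriv_general {N : ℕ} (hN : 2 < N) {a b : ℕ → ℝ} (ha : ∀ k < N, a k ≠ 0)
    {lam : ℝ → ℝ} {W : ℝ → EuclideanSpace ℂ (Fin N)} {p : ℝ} (hp : Real.sin p ≠ 0)
    (hW : ContinuousAt W p) (hWp : W p ≠ 0)
    (heig : ∀ᶠ q in 𝓝 p, hper N a b q *ᵥ W q = (lam q : ℂ) • W q) :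
    HasDerivAt lam (-2 * a (N - 1) * (exp (p * I) * conj (W p ⟨0, by omega⟩)
      * W p ⟨N - 1, by omega⟩).im / ‖W p‖ ^ 2) p ∧ deriv lam p ≠ 0 := by
  have hderiv := hasDerivAt_hper_eigenvalue hN hW hWp heig
  have hcorner := im_corner_ne_zero_of_hper_mulVec_eq hN ha hp heig.self_of_nhds
    (by simpa using hWp)
  refine ⟨hderiv, ?_⟩
  rw [hderiv.deriv]
  have := ha (N - 1) (by omega)
  positivity

/-- For a differentiable normalized eigenpair branch
`(λ(p), W(p))` of the periodic matrix `h(p)`, for every `p ∈ (0, π)` one has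
`λ'(p) = -2 a_N Im(e^{ip} conj(W₁(p)) W_N(p))` and `λ'(p) ≠ 0`. -/
theorem hper_eigenvalue_deriv (N : ℕ) (hN : 3 ≤ N) (a b : ℕ → ℝ)
    (ha : ∀ k < N, 0 < a k)
    (lam : ℝ → ℝ) (W : ℝ → EuclideanSpace ℂ (Fin N))
    (hlam : Differentiable ℝ lam) (hW : Differentiable ℝ W)
    (hnorm : ∀ p : ℝ, ‖W p‖ = 1)
    (heig : ∀ p : ℝ, (hper N a b p) *ᵥ (W p) = (lam p : ℂ) • W p) :
    ∀ p ∈ Set.Ioo (0 : ℝ) Real.pi,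
      deriv lam p
        = -2 * a (N - 1)
          * (Complex.exp ((p : ℂ) * Complex.I)
              * (starRingEnd ℂ) (W p (⟨0, by omega⟩ : Fin N))
              * W p (⟨N - 1, by omega⟩ : Fin N)).im ∧
      deriv lam p ≠ 0 := by
  intro p hp
  have hWp : W p ≠ 0 := norm_ne_zero_iff.mp (by simp [hnorm p])
  obtain ⟨hderiv, hne⟩ := hper_eigenvalue_deriv_general hN (fun k hk => (ha k hk).ne')
    (Real.sin_pos_of_pos_of_lt_pi hp.1 hp.2).ne' hW.continuous.continuousAt hWp (.of_forall heig)
  exact ⟨by simpa [hnorm p, -mul_im] using hderiv.deriv, hne⟩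
end

section
/- Let N ≥ 3, let a₁, …, a_N, a_{N+1} > 0 and b₁, …, b_N ∈ ℝ, and let h(p) be the N×N Hermitian matrix which agrees with the real symmetric tridiagonal matrix B except for the corner entries h(p)₁,N = a_N e^{ip} + a_{N+1} e^{−ip} and h(p)_{N,1} = a_N e^{−ip} + a_{N+1} e^{ip}. Then: (i) every eigenvalue of h(π/2) is simple; (ii) for every p ∈ ℝ and every eigenvalue λ of h(p), dim ker(h(p) − λI) ≤ 2; (iii) if moreover a_N ≠ a_{N+1}, then for every p ∈ (0, π) every eigenvalue of h(p) is simple. -/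
open Matrix Complex

/-- The `N×N` Hermitian matrix with real symmetric tridiagonal part (diagonal
`b 0, …, b (N-1)`, off-diagonal `a 0, …, a (N-2)`) and corner entries
`(h p)₁,N = a_N e^{ip} + a_{N+1} e^{-ip}`, `(h p)_{N,1} = a_N e^{-ip} + a_{N+1} e^{ip}`
(with `a_N = a (N-1)`, `a_{N+1} = a N` in 0-based notation). -/
noncomputable def hcor (N : ℕ) (a b : ℕ → ℝ) (p : ℝ) : Matrix (Fin N) (Fin N) ℂ :=
  Matrix.of fun i j =>
    if (i : ℕ) = (j : ℕ) then (b i : ℂ)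
    else if (i : ℕ) + 1 = (j : ℕ) then (a i : ℂ)
    else if (j : ℕ) + 1 = (i : ℕ) then (a j : ℂ)
    else if (i : ℕ) = 0 ∧ (j : ℕ) + 1 = N then
      (a (N - 1) : ℂ) * Complex.exp ((p : ℂ) * Complex.I)
        + (a N : ℂ) * Complex.exp (-((p : ℂ) * Complex.I))
    else if (j : ℕ) = 0 ∧ (i : ℕ) + 1 = N then
      (a (N - 1) : ℂ) * Complex.exp (-((p : ℂ) * Complex.I))
        + (a N : ℂ) * Complex.exp ((p : ℂ) * Complex.I)
    else 0

/-!
The interior rows of the eigenvalue equation `h(p) v = μ v` form a three-term recurrence with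
nonzero leading coefficients, so `v` is determined by its first two coordinates; this bounds the
eigenspaces by dimension `2`. Since `h(p)` is Hermitian, `μ` is real and the recurrence has real
coefficients: if the first coordinate of `v` vanishes, then every coordinate is a real multiple of
the second one. The first row then reads `a₁ v₂ + c r v₂ = 0` with `r` real and `c` the corner
entry, which forces `v = 0` as soon as `c` is either zero or not real. So in that case `v` is
determined by its first coordinate alone. Finally
`c = (a_N + a_{N+1}) cos p + i (a_N - a_{N+1}) sin p`.
-/

section LinearAlgebra

theorem finrank_le_card_of_forall_eq_zero {ι R : Type*} [Ring R] [StrongRankCondition R]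
    {W : Submodule R (ι → R)} (s : Finset ι) (hs : ∀ v ∈ W, (∀ i ∈ s, v i = 0) → v = 0) :
    Module.finrank R W ≤ s.card := by
  let restrict : W →ₗ[R] s → R := LinearMap.funLeft R R Subtype.val ∘ₗ W.subtype
  have restrict_injective : Function.Injective restrict :=
    (injective_iff_map_eq_zero restrict).2 fun v hv =>
      Subtype.ext (hs v v.2 fun i hi => congrFun hv ⟨i, hi⟩)
  simpa using LinearMap.finrank_le_finrank_of_injective restrict_injective

theorem mem_ker_mulVecLin_sub_smul_one {ι R : Type*} [Fintype ι] [DecidableEq ι] [CommRing R]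
    {M : Matrix ι ι R} {μ : R} {v : ι → R} :
    v ∈ LinearMap.ker (M - μ • (1 : Matrix ι ι R)).mulVecLin ↔ M *ᵥ v = μ • v := by
  simp [sub_eq_zero]

theorem mulVec_apply_eq_add_add {m ι R : Type*} [Fintype ι] [NonUnitalNonAssocSemiring R]
    {M : Matrix m ι R} {i : m} {j₁ j₂ j₃ : ι}
    (h₁₂ : j₁ ≠ j₂) (h₁₃ : j₁ ≠ j₃) (h₂₃ : j₂ ≠ j₃)
    (hM : ∀ j, j ≠ j₁ → j ≠ j₂ → j ≠ j₃ → M i j = 0) (v : ι → R) :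
    (M *ᵥ v) i = M i j₁ * v j₁ + M i j₂ * v j₂ + M i j₃ * v j₃ := by
  classical
  have summand_eq_zero : ∀ j, j ∉ ({j₁, j₂, j₃} : Finset ι) → M i j * v j = 0 := fun j hj => by
    simp only [Finset.mem_insert, Finset.mem_singleton, not_or] at hj
    rw [hM j hj.1 hj.2.1 hj.2.2, zero_mul]
  rw [mulVec, dotProduct,
    ← Finset.sum_subset (Finset.subset_univ {j₁, j₂, j₃}) fun j _ => summand_eq_zero j,
    Finset.sum_insert (by simp [h₁₂, h₁₃]), Finset.sum_pair h₂₃, add_assoc]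

theorem exists_eq_ofReal_of_isHermitian {ι 𝕜 : Type*} [Fintype ι] [RCLike 𝕜]
    {M : Matrix ι ι 𝕜} (hM : M.IsHermitian) {μ : 𝕜} {v : ι → 𝕜} (hv : v ≠ 0)
    (h : M *ᵥ v = μ • v) : ∃ r : ℝ, μ = r := by
  classical
  have symm := Matrix.isSymmetric_toEuclideanLin_iff.2 hM
  have eigenvector :
      Module.End.HasEigenvector (Matrix.toEuclideanLin M) μ (WithLp.toLp 2 v) :=
    ⟨Module.End.mem_eigenspace_iff.2 (by simp [Matrix.toLpLin_toLp, h]), by simpa using hv⟩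
  exact RCLike.conj_eq_iff_real.1
    (symm.conj_eigenvalue_eq_self (Module.End.hasEigenvalue_of_hasEigenvector eigenvector))

end LinearAlgebra

/-- `v` solves the three-term recurrence `α i * v i + β i * v (i + 1) + γ i * v (i + 2) = 0`.
The coefficients may lie in a smaller field than the entries of `v`, which is how solutions
with real coefficients but complex entries are treated. -/
def IsThreeTermSolution {k V : Type*} [Semiring k] [AddCommMonoid V] [Module k V] {n : ℕ}
    (α β γ : Fin n → k) (v : Fin (n + 2) → V) : Prop :=
  ∀ i, α i • v i.castSucc.castSucc + β i • v i.succ.castSucc + γ i • v i.succ.succ = 0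

namespace IsThreeTermSolution

section Module

variable {k V : Type*} [DivisionRing k] [AddCommGroup V] [Module k V] {n : ℕ}
  {α β γ : Fin n → k} {v : Fin (n + 2) → V}

theorem apply_mem (hv : IsThreeTermSolution α β γ v) (hγ : ∀ i, γ i ≠ 0) {S : Submodule k V}
    (h0 : v 0 ∈ S) (h1 : v 1 ∈ S) (i : Fin (n + 2)) : v i ∈ S := by
  have consecutive (i : Fin (n + 1)) : v i.castSucc ∈ S ∧ v i.succ ∈ S := by
    induction i using Fin.induction with
    | zero => exact ⟨h0, h1⟩
    | succ i ih =>
      refine ⟨ih.2, (S.smul_mem_iff (hγ i)).1 ?_⟩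
      rw [← neg_eq_of_add_eq_zero_right (hv i)]
      exact S.neg_mem (S.add_mem (S.smul_mem _ ih.1) (S.smul_mem _ ih.2))
  cases i using Fin.cases with
  | zero => exact h0
  | succ i => exact (consecutive i).2

theorem eq_zero (hv : IsThreeTermSolution α β γ v) (hγ : ∀ i, γ i ≠ 0)
    (h0 : v 0 = 0) (h1 : v 1 = 0) : v = 0 :=
  funext fun i => (Submodule.mem_bot k).1 (hv.apply_mem hγ (by simp [h0]) (by simp [h1]) i)

theorem exists_eq_smul_one (hv : IsThreeTermSolution α β γ v) (hγ : ∀ i, γ i ≠ 0)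
    (h0 : v 0 = 0) (i : Fin (n + 2)) : ∃ r : k, v i = r • v 1 := by
  have hi : v i ∈ Submodule.span k {v 1} :=
    hv.apply_mem hγ (by simp [h0]) (Submodule.mem_span_singleton_self _) i
  exact (Submodule.mem_span_singleton.1 hi).imp fun _ => Eq.symm

end Module

theorem of_algebraMap {k K V : Type*} [CommSemiring k] [Semiring K] [Algebra k K]
    [AddCommMonoid V] [Module k V] [Module K V] [IsScalarTower k K V] {n : ℕ}
    {α β γ : Fin n → k} {v : Fin (n + 2) → V}
    (hv : IsThreeTermSolution (fun i => algebraMap k K (α i)) (fun i => algebraMap k K (β i))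
      (fun i => algebraMap k K (γ i)) v) :
    IsThreeTermSolution α β γ v := by
  simpa only [IsThreeTermSolution, algebraMap_smul] using hv

theorem eq_zero_of_corner {k K : Type*} [Field k] [Field K] [Algebra k K] {n : ℕ}
    {α β γ : Fin n → k} {v : Fin (n + 2) → K} (hv : IsThreeTermSolution α β γ v)
    (hγ : ∀ i, γ i ≠ 0) (h0 : v 0 = 0) {δ : k} (hδ : δ ≠ 0) {c : K}
    (hc : c ∈ Set.range (algebraMap k K) → c = 0) (hrow : δ • v 1 + c * v (Fin.last _) = 0) :
    v = 0 := by
  refine hv.eq_zero hγ h0 ?_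
  by_contra h1
  obtain ⟨r, hr⟩ := hv.exists_eq_smul_one hγ h0 (Fin.last _)
  have hδK : algebraMap k K δ ≠ 0 := by simpa using hδ
  have c_mul : c * algebraMap k K r = -algebraMap k K δ := by
    refine mul_right_cancel₀ h1 ?_
    rw [hr, Algebra.smul_def, Algebra.smul_def] at hrow
    linear_combination hrow
  have hrK : algebraMap k K r ≠ 0 := right_ne_zero_of_mul (c_mul ▸ neg_ne_zero.2 hδK)
  have hc_range : c ∈ Set.range (algebraMap k K) :=
    ⟨-δ / r, by rw [map_div₀, map_neg, ← c_mul, mul_div_cancel_right₀ _ hrK]⟩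
  rw [hc hc_range, zero_mul] at c_mul
  exact neg_ne_zero.2 hδK c_mul.symm

end IsThreeTermSolution

/-- The upper right corner entry `x e^{ip} + y e^{-ip}` of `hcor`, where `x = a_N` and
`y = a_{N+1}`. -/
noncomputable def cornerEntry (x y p : ℝ) : ℂ :=
  x * exp (p * I) + y * exp (-(p * I))

theorem cornerEntry_re (x y p : ℝ) : (cornerEntry x y p).re = (x + y) * Real.cos p := by
  simp [cornerEntry, exp_re, add_mul]

theorem cornerEntry_im (x y p : ℝ) : (cornerEntry x y p).im = (x - y) * Real.sin p := by
  simp [cornerEntry, exp_im, sub_mul, ← sub_eq_add_neg]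

section hcor

variable {n : ℕ} {a b : ℕ → ℝ} {p : ℝ} {μ : ℂ} {v : Fin (n + 3) → ℂ}

theorem hcor_apply_eq_zero {N : ℕ} {i j : Fin N} (h_diag : (i : ℕ) ≠ j)
    (h_super : (i : ℕ) + 1 ≠ j) (h_sub : (j : ℕ) + 1 ≠ i)
    (h_upper : ¬((i : ℕ) = 0 ∧ (j : ℕ) + 1 = N)) (h_lower : ¬((j : ℕ) = 0 ∧ (i : ℕ) + 1 = N)) :
    hcor N a b p i j = 0 := by
  rw [hcor, of_apply, if_neg h_diag, if_neg h_super, if_neg h_sub, if_neg h_upper, if_neg h_lower]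

theorem hcor_isHermitian (n : ℕ) (a b : ℕ → ℝ) (p : ℝ) : (hcor (n + 3) a b p).IsHermitian := by
  ext i j
  simp only [hcor, conjTranspose_apply, of_apply]
  split_ifs <;> first
    | omega
    | (simp [← exp_conj]; done)
    | simp [show i = j from Fin.ext (by omega)]

theorem hcor_mulVec_zero (v : Fin (n + 3) → ℂ) :
    (hcor (n + 3) a b p *ᵥ v) 0 =
      b 0 * v 0 + a 0 * v 1 + cornerEntry (a (n + 2)) (a (n + 3)) p * v (Fin.last _) := by
  rw [mulVec_apply_eq_add_add (j₁ := 0) (j₂ := 1) (j₃ := Fin.last _)]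
  · simp [hcor, cornerEntry]
  case hM =>
    intro j _ _ _
    apply hcor_apply_eq_zero <;> grind [Fin.val_zero, Fin.val_one]
  all_goals simp [Fin.ext_iff]

theorem hcor_mulVec_interior (v : Fin (n + 3) → ℂ) (i : Fin (n + 1)) :
    (hcor (n + 3) a b p *ᵥ v) i.succ.castSucc =
      a i * v i.castSucc.castSucc + b (i + 1) * v i.succ.castSucc + a (i + 1) * v i.succ.succ := by
  rw [mulVec_apply_eq_add_add (j₁ := i.castSucc.castSucc) (j₂ := i.succ.castSucc)
    (j₃ := i.succ.succ)]
  · simp [hcor, add_assoc]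
  case hM =>
    intro j _ _ _
    apply hcor_apply_eq_zero <;> grind
  all_goals simp [Fin.ext_iff, add_assoc]

theorem isThreeTermSolution_of_hcor_mulVec_eq_smul (hv : hcor (n + 3) a b p *ᵥ v = μ • v) :
    IsThreeTermSolution (fun i : Fin (n + 1) => (a i : ℂ)) (fun i => b (i + 1) - μ)
      (fun i => (a (i + 1) : ℂ)) v := fun i => by
  have row := congrFun hv i.succ.castSucc
  rw [hcor_mulVec_interior, Pi.smul_apply] at row
  simp only [smul_eq_mul] at row ⊢
  linear_combination row

theorem finrank_ker_hcor_sub_le_two (ha : ∀ k, k + 1 < n + 3 → a k ≠ 0) :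
    Module.finrank ℂ (LinearMap.ker (hcor (n + 3) a b p - μ • 1).mulVecLin) ≤ 2 := by
  refine (finrank_le_card_of_forall_eq_zero {0, 1} fun v hv h01 => ?_).trans Finset.card_le_two
  have solution :=
    isThreeTermSolution_of_hcor_mulVec_eq_smul (mem_ker_mulVecLin_sub_smul_one.1 hv)
  exact solution.eq_zero (fun i => mod_cast ha (i + 1) (by omega)) (h01 0 (by simp))
    (h01 1 (by simp))

theorem eq_zero_of_hcor_mulVec_eq_ofReal_smul {r : ℝ} (ha : ∀ k, k + 1 < n + 3 → a k ≠ 0)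
    (hc : (cornerEntry (a (n + 2)) (a (n + 3)) p).im = 0 →
      cornerEntry (a (n + 2)) (a (n + 3)) p = 0)
    (hv : hcor (n + 3) a b p *ᵥ v = (r : ℂ) • v) (h0 : v 0 = 0) : v = 0 := by
  have solution : IsThreeTermSolution (fun i : Fin (n + 1) => a i) (fun i => b (i + 1) - r)
      (fun i => a (i + 1)) v :=
    .of_algebraMap (K := ℂ) (by simpa using isThreeTermSolution_of_hcor_mulVec_eq_smul hv)
  have row := congrFun hv 0
  rw [hcor_mulVec_zero, Pi.smul_apply, h0, mul_zero, zero_add, smul_zero] at row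
  refine solution.eq_zero_of_corner (fun i => ha (i + 1) (by omega)) h0 (ha 0 (by omega)) ?_ row
  rintro ⟨s, hs⟩
  exact hc (hs ▸ ofReal_im s)

theorem finrank_ker_hcor_sub_eq_one (ha : ∀ k, k + 1 < n + 3 → a k ≠ 0)
    (hc : (cornerEntry (a (n + 2)) (a (n + 3)) p).im = 0 →
      cornerEntry (a (n + 2)) (a (n + 3)) p = 0)
    (hμ : ∃ v : Fin (n + 3) → ℂ, v ≠ 0 ∧ hcor (n + 3) a b p *ᵥ v = μ • v) :
    Module.finrank ℂ (LinearMap.ker (hcor (n + 3) a b p - μ • 1).mulVecLin) = 1 := by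
  obtain ⟨v, hv0, hv⟩ := hμ
  obtain ⟨r, rfl⟩ := exists_eq_ofReal_of_isHermitian (hcor_isHermitian n a b p) hv0 hv
  refine le_antisymm ?_ (Submodule.one_le_finrank_iff.2 ?_)
  · refine finrank_le_card_of_forall_eq_zero {0} fun u hu hu0 => ?_
    exact eq_zero_of_hcor_mulVec_eq_ofReal_smul ha hc (mem_ker_mulVecLin_sub_smul_one.1 hu)
      (hu0 0 (by simp))
  · exact (Submodule.ne_bot_iff _).2 ⟨v, mem_ker_mulVecLin_sub_smul_one.2 hv, hv0⟩

end hcor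

theorem hcor_eigenspaces_general (N : ℕ) (hN : 3 ≤ N) (a b : ℕ → ℝ)
    (ha : ∀ k, k + 1 < N → a k ≠ 0) :
    (∀ μ : ℂ,
      (∃ v : Fin N → ℂ, v ≠ 0 ∧ hcor N a b (Real.pi / 2) *ᵥ v = μ • v) →
      Module.finrank ℂ
        (LinearMap.ker
          (hcor N a b (Real.pi / 2) - μ • (1 : Matrix (Fin N) (Fin N) ℂ)).mulVecLin)
        = 1) ∧
    (∀ (p : ℝ) (μ : ℂ),
      Module.finrank ℂ
        (LinearMap.ker (hcor N a b p - μ • (1 : Matrix (Fin N) (Fin N) ℂ)).mulVecLin)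
        ≤ 2) ∧
    (a (N - 1) ≠ a N →
      ∀ p : ℝ, Real.sin p ≠ 0 → ∀ μ : ℂ,
        (∃ v : Fin N → ℂ, v ≠ 0 ∧ hcor N a b p *ᵥ v = μ • v) →
        Module.finrank ℂ
          (LinearMap.ker (hcor N a b p - μ • (1 : Matrix (Fin N) (Fin N) ℂ)).mulVecLin)
          = 1) := by
  obtain ⟨n, rfl⟩ := Nat.exists_eq_add_of_le' hN
  refine ⟨fun μ hμ => finrank_ker_hcor_sub_eq_one ha (fun him => ?_) hμ,
    fun p μ => finrank_ker_hcor_sub_le_two ha,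
    fun hne p hp μ hμ => finrank_ker_hcor_sub_eq_one ha (fun him => ?_) hμ⟩
  · exact Complex.ext (by simp [cornerEntry_re]) him
  · rw [cornerEntry_im] at him
    exact absurd him (mul_ne_zero (sub_ne_zero.2 hne) hp)

/-- (i) Every eigenvalue of `h(π/2)` is simple; (ii) every
eigenspace of `h(p)` has dimension at most `2`; (iii) if `a_N ≠ a_{N+1}`, then for
`p ∈ (0, π)` every eigenvalue of `h(p)` is simple. -/
theorem hcor_eigenspaces (N : ℕ) (hN : 3 ≤ N) (a b : ℕ → ℝ)
    (ha : ∀ k < N + 1, 0 < a k) :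
    (∀ μ : ℂ,
      (∃ v : Fin N → ℂ, v ≠ 0 ∧ (hcor N a b (Real.pi / 2)) *ᵥ v = μ • v) →
      Module.finrank ℂ
        (LinearMap.ker
          (hcor N a b (Real.pi / 2) - μ • (1 : Matrix (Fin N) (Fin N) ℂ)).mulVecLin)
        = 1) ∧
    (∀ (p : ℝ) (μ : ℂ),
      (∃ v : Fin N → ℂ, v ≠ 0 ∧ (hcor N a b p) *ᵥ v = μ • v) →
      Module.finrank ℂ
        (LinearMap.ker (hcor N a b p - μ • (1 : Matrix (Fin N) (Fin N) ℂ)).mulVecLin)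
        ≤ 2) ∧
    (a (N - 1) ≠ a N →
      ∀ p ∈ Set.Ioo (0 : ℝ) Real.pi, ∀ μ : ℂ,
        (∃ v : Fin N → ℂ, v ≠ 0 ∧ (hcor N a b p) *ᵥ v = μ • v) →
        Module.finrank ℂ
          (LinearMap.ker (hcor N a b p - μ • (1 : Matrix (Fin N) (Fin N) ℂ)).mulVecLin)
          = 1) := by
  obtain ⟨h_half, h_two, h_simple⟩ :=
    hcor_eigenspaces_general N hN a b fun k _ => (ha k (by omega)).ne'
  exact ⟨h_half, fun p μ _ => h_two p μ,
    fun hne p hp => h_simple hne p (Real.sin_pos_of_mem_Ioo hp).ne'⟩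
end

section
/- Let N ≥ 3, let a₁, …, a_N > 0 and b₁, …, b_N ∈ ℝ, let h(p) be the periodic N×N Hermitian matrix with corner phases, let a = (−1)^{N−1} a₁a₂⋯a_N and let Δ(x) = det(B − xI) − a_N²·det(Ḃ − xI). Suppose λ : ℝ → ℝ is differentiable and satisfies det(h(p) − λ(p)·I) = 0 for all p ∈ ℝ. Then for every p₀ ∈ ℝ with Δ'(λ(p₀)) ≠ 0, one has λ'(p₀) = 2a·sin(p₀) / Δ'(λ(p₀)). -/
open Matrix Complex

/-- The real symmetric tridiagonal `N×N` matrix with diagonal `b 0, …, b (N-1)`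
and off-diagonal entries `a 0, …, a (N-2)`. -/
noncomputable def triR (N : ℕ) (a b : ℕ → ℝ) : Matrix (Fin N) (Fin N) ℝ :=
  Matrix.of fun i j =>
    if (i : ℕ) = (j : ℕ) then b i
    else if (i : ℕ) + 1 = (j : ℕ) then a i
    else if (j : ℕ) + 1 = (i : ℕ) then a j
    else 0

/-- `Ḃ`: the `(N-2)×(N-2)` matrix obtained from `triR N a b` by removing the first
and last rows and columns. -/
noncomputable def triRsub (N : ℕ) (a b : ℕ → ℝ) :
    Matrix (Fin (N - 2)) (Fin (N - 2)) ℝ :=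
  (triR N a b).submatrix
    (fun i => ⟨i.val + 1, by have := i.isLt; omega⟩)
    (fun j => ⟨j.val + 1, by have := j.isLt; omega⟩)

/-- `Δ(x) = det(B - xI) - a_N² det(Ḃ - xI)`. -/
noncomputable def DeltaFun (N : ℕ) (a b : ℕ → ℝ) : ℝ → ℝ :=
  fun x =>
    (triR N a b - x • (1 : Matrix (Fin N) (Fin N) ℝ)).det
      - (a (N - 1)) ^ 2
        * (triRsub N a b - x • (1 : Matrix (Fin (N - 2)) (Fin (N - 2)) ℝ)).det

/-!
Subtracting `x` and expanding the determinant along the two corner entries `a_N e^{±ip}` gives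
`det (h(p) - x) = Δ(x) + 2 a cos p`: each corner alone contributes a triangular minor with
diagonal `a₁, …, a_{N-1}`, and the two together contribute `-a_N² det (Ḃ - x)`, in which the phases
cancel. A continuous branch therefore satisfies `Δ(λ(p)) = -2 a cos p`, and where `Δ'` does not
vanish this relation can be differentiated in `p`.
-/

section Corners

variable {R : Type*} [CommRing R]

theorem det_add_single {m : Type*} [Fintype m] [DecidableEq m] (A : Matrix m m R) (i j : m)
    (c : R) : (A + single i j c).det = A.det + c * A.adjugate j i := by
  have hrow : A + single i j c = A.updateRow i (A i + c • Pi.single j 1) := by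
    ext k l
    by_cases hk : k = i
    · subst hk
      simp [single_apply, Pi.single_apply, eq_comm]
    · simp [updateRow_ne, hk, Ne.symm hk]
  rw [hrow, det_updateRow_add, updateRow_eq_self, det_updateRow_smul, adjugate_apply]

theorem det_add_single_zero_last {n : ℕ} (A : Matrix (Fin (n + 1)) (Fin (n + 1)) R) (u : R) :
    (A + single 0 (Fin.last n) u).det
      = A.det + (-1) ^ n * u * (A.submatrix Fin.succ Fin.castSucc).det := by
  rw [det_add_single, adjugate_fin_succ_eq_det_submatrix, Fin.succAbove_zero, Fin.succAbove_last,
    Fin.val_zero, Fin.val_last]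
  ring

theorem det_add_single_last_zero {n : ℕ} (A : Matrix (Fin (n + 1)) (Fin (n + 1)) R) (v : R) :
    (A + single (Fin.last n) 0 v).det
      = A.det + (-1) ^ n * v * (A.submatrix Fin.castSucc Fin.succ).det := by
  rw [det_add_single, adjugate_fin_succ_eq_det_submatrix, Fin.succAbove_zero, Fin.succAbove_last,
    Fin.val_zero, Fin.val_last]
  ring

theorem det_add_corners {n : ℕ} (A : Matrix (Fin (n + 2)) (Fin (n + 2)) R) (u v : R) :
    (A + single 0 (Fin.last (n + 1)) u + single (Fin.last (n + 1)) 0 v).det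
      = A.det + (-1) ^ (n + 1) * u * (A.submatrix Fin.succ Fin.castSucc).det
        + (-1) ^ (n + 1) * v * (A.submatrix Fin.castSucc Fin.succ).det
        - u * v *
          (A.submatrix (fun i : Fin n => i.castSucc.succ) fun i => i.castSucc.succ).det := by
  have hcorner : (A + single 0 (Fin.last (n + 1)) u).submatrix Fin.castSucc Fin.succ
      = A.submatrix Fin.castSucc Fin.succ + single 0 (Fin.last n) u := by
    ext i j
    simp only [submatrix_apply, Matrix.add_apply, single_apply, Fin.ext_iff, Fin.val_zero,
      Fin.val_last, Fin.val_castSucc, Fin.val_succ, Nat.add_right_cancel_iff]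
  have hinner : (A.submatrix Fin.castSucc Fin.succ).submatrix Fin.succ Fin.castSucc
      = A.submatrix (fun i : Fin n => i.castSucc.succ) fun i => i.castSucc.succ := rfl
  have hsign : (-1 : R) ^ (n + 1) * (-1) ^ n = -1 := by
    rw [← pow_add]
    exact Odd.neg_one_pow ⟨n, by ring⟩
  rw [det_add_single_last_zero, det_add_single_zero_last, hcorner, det_add_single_zero_last,
    hinner]
  linear_combination
    u * v * (A.submatrix (fun i : Fin n => i.castSucc.succ) fun i => i.castSucc.succ).det * hsign

end Corners

section Tridiagonal

variable (n : ℕ) {N : ℕ} (a b : ℕ → ℝ) (p x : ℝ)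

theorem triR_isSymm : (triR N a b).IsSymm := by
  ext i j
  simp only [triR, transpose_apply, of_apply]
  split_ifs <;> first | omega | simp_all

theorem det_triR_sub_smul_one_submatrix_succ_castSucc :
    ((triR (n + 1) a b - x • 1).submatrix Fin.succ Fin.castSucc).det
      = ∏ k ∈ Finset.range n, a k := by
  rw [det_of_isUpperTriangular, Finset.prod_range]
  · refine Finset.prod_congr rfl fun i _ => ?_
    simp only [triR, submatrix_apply, Matrix.sub_apply, Matrix.smul_apply, of_apply, one_apply,
      Fin.ext_iff, Fin.val_succ, Fin.val_castSucc]
    split_ifs <;> first | omega | simp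
  · intro i j hji
    have hlt : (j : ℕ) < i := hji
    simp only [triR, submatrix_apply, Matrix.sub_apply, Matrix.smul_apply, of_apply, one_apply,
      Fin.ext_iff, Fin.val_succ, Fin.val_castSucc]
    split_ifs <;> first | omega | simp

theorem det_triR_sub_smul_one_submatrix_castSucc_succ :
    ((triR (n + 1) a b - x • 1).submatrix Fin.castSucc Fin.succ).det
      = ∏ k ∈ Finset.range n, a k := by
  have hsymm : (triR (n + 1) a b - x • 1).IsSymm := (triR_isSymm a b).sub (isSymm_one.smul x)
  rw [← det_triR_sub_smul_one_submatrix_succ_castSucc n a b x, ← det_transpose,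
    transpose_submatrix, hsymm.eq]

theorem DeltaFun_add_two_eq_det_sub :
    DeltaFun (n + 2) a b x = (triR (n + 2) a b - x • 1).det
      - a (n + 1) ^ 2 * ((triR (n + 2) a b - x • 1).submatrix
          (fun i : Fin n => i.castSucc.succ) fun i => i.castSucc.succ).det := by
  let middle (i : Fin n) : Fin (n + 2) := i.castSucc.succ
  have hinner : (triR (n + 2) a b - x • 1).submatrix middle middle
      = (triR (n + 2) a b).submatrix middle middle - x • 1 := by
    ext i j
    simp [middle, one_apply, Fin.ext_iff]
  rw [hinner]
  rfl

-- For two sites the corners coincide with the off-diagonal entries, hence the index `n + 3`.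
theorem hper_sub_smul_one_eq_add_single :
    hper (n + 3) a b p - (x : ℂ) • 1
      = ofRealHom.mapMatrix (triR (n + 3) a b - x • 1)
        + single 0 (Fin.last (n + 2)) (a (n + 2) * exp (p * I))
        + single (Fin.last (n + 2)) 0 (a (n + 2) * exp (-(p * I))) := by
  ext i j
  simp only [hper, triR, Matrix.sub_apply, Matrix.add_apply, Matrix.smul_apply, of_apply,
    RingHom.mapMatrix_apply, map_apply, single_apply, one_apply, Fin.ext_iff, Fin.val_zero,
    Fin.val_last, ofRealHom_eq_coe, smul_eq_mul, ofReal_sub, ofReal_mul, Nat.add_succ_sub_one]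
  split_ifs <;> first | omega | simp

theorem det_hper_sub_smul_one (hN : 3 ≤ N) :
    (hper N a b p - (x : ℂ) • 1).det
      = ((DeltaFun N a b x
          + 2 * ((-1) ^ (N - 1) * ∏ k ∈ Finset.range N, a k) * Real.cos p : ℝ) : ℂ) := by
  obtain ⟨n, rfl⟩ := Nat.exists_eq_add_of_le' hN
  have hsum : exp (p * I) + exp (-(p * I)) = 2 * cos p := by
    rw [two_cos, neg_mul]
  have hprod : exp (p * I) * exp (-(p * I)) = 1 := by
    rw [← exp_add, add_neg_cancel, exp_zero]
  have hminor {k : ℕ} (f g : Fin k → Fin (n + 3)) (A : Matrix (Fin (n + 3)) (Fin (n + 3)) ℝ) :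
      ((ofRealHom.mapMatrix A).submatrix f g).det = ((A.submatrix f g).det : ℂ) :=
    (ofRealHom.map_det (A.submatrix f g)).symm
  rw [hper_sub_smul_one_eq_add_single, det_add_corners, ← RingHom.map_det, hminor, hminor, hminor,
    det_triR_sub_smul_one_submatrix_succ_castSucc, det_triR_sub_smul_one_submatrix_castSucc_succ,
    DeltaFun_add_two_eq_det_sub, Finset.prod_range_succ a (n + 2)]
  simp only [Nat.add_succ_sub_one, ofRealHom_eq_coe]
  push_cast
  generalize (((triR (n + 3) a b - x • 1).submatrix
    (fun i : Fin (n + 1) => i.castSucc.succ) fun i => i.castSucc.succ).det : ℂ) = d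
  linear_combination
    (-1) ^ (n + 2) * a (n + 2) * (∏ k ∈ Finset.range (n + 2), (a k : ℂ)) * hsum
      - a (n + 2) ^ 2 * d * hprod

end Tridiagonal

open Topology in
theorem hper_branch_deriv_general {N : ℕ} (hN : 3 ≤ N) (a b : ℕ → ℝ) {lam : ℝ → ℝ} {p₀ : ℝ}
    (hlam : ContinuousAt lam p₀)
    (hdet : ∀ᶠ p in 𝓝 p₀, (hper N a b p - (lam p : ℂ) • 1).det = 0)
    (hΔ : deriv (DeltaFun N a b) (lam p₀) ≠ 0) :
    HasDerivAt lam
      (2 * ((-1) ^ (N - 1) * ∏ k ∈ Finset.range N, a k) * Real.sin p₀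
        / deriv (DeltaFun N a b) (lam p₀)) p₀ := by
  set c : ℝ := (-1) ^ (N - 1) * ∏ k ∈ Finset.range N, a k
  have hbranch : DeltaFun N a b ∘ lam =ᶠ[𝓝 p₀] fun p => -(2 * c) * Real.cos p := by
    filter_upwards [hdet] with p hp
    rw [det_hper_sub_smul_one a b p (lam p) hN, ofReal_eq_zero] at hp
    simp only [Function.comp_apply]
    linear_combination hp
  have hcos : HasDerivAt (fun p => -(2 * c) * Real.cos p) (2 * c * Real.sin p₀) p₀ := by
    simpa only [neg_mul_neg] using (Real.hasDerivAt_cos p₀).const_mul (-(2 * c))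
  exact .of_comp_left hlam (differentiableAt_of_deriv_ne_zero hΔ).hasDerivAt hcos hΔ hbranch

/-- If `λ : ℝ → ℝ` is differentiable with
`det(h(p) - λ(p)I) = 0` for all `p`, then at every `p₀` with `Δ'(λ(p₀)) ≠ 0` one
has `λ'(p₀) = 2a sin(p₀)/Δ'(λ(p₀))`, where `a = (-1)^{N-1} a₁⋯a_N`. -/
theorem hper_branch_deriv (N : ℕ) (hN : 3 ≤ N) (a b : ℕ → ℝ)
    (ha : ∀ k < N, 0 < a k)
    (lam : ℝ → ℝ) (hlam : Differentiable ℝ lam)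
    (hdet : ∀ p : ℝ,
      (hper N a b p - (lam p : ℂ) • (1 : Matrix (Fin N) (Fin N) ℂ)).det = 0) :
    ∀ p₀ : ℝ, deriv (DeltaFun N a b) (lam p₀) ≠ 0 →
      deriv lam p₀
        = 2 * ((-1 : ℝ) ^ (N - 1) * ∏ k ∈ Finset.range N, a k) * Real.sin p₀
            / deriv (DeltaFun N a b) (lam p₀) := by
  intro p₀ hΔ
  exact (hper_branch_deriv_general hN a b (hlam p₀).continuousAt (.of_forall hdet) hΔ).deriv
end

section
/- Let N ≥ 3, let a₁, …, a_N > 0 and b₁, …, b_N ∈ ℝ, let h(p) be the periodic N×N Hermitian matrix with corner phases, and let Δ(x) = det(h(π/2) − xI), a real polynomial of degree N in x with leading coefficient (−1)^N. Then h(π/2) has N distinct real eigenvalues λ₁ < λ₂ < ⋯ < λ_N, one has (−1)^j·Δ'(λ_j) > 0 for every j = 1, …, N, and the derivative Δ' has exactly N−1 real roots μ₁ < μ₂ < ⋯ < μ_{N−1}, which satisfy λ_j < μ_j < λ_{j+1} for j = 1, …, N−1. -/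
open Matrix Complex Polynomial

/-- `Δ(x) = det(h(π/2) - xI)`, a real-valued function of `x ∈ ℝ` (the determinant
is real since `h(π/2)` is Hermitian). -/
noncomputable def DeltaHalf (N : ℕ) (a b : ℕ → ℝ) : ℝ → ℝ :=
  fun x =>
    ((hper N a b (Real.pi / 2)
        - (x : ℂ) • (1 : Matrix (Fin N) (Fin N) ℂ)).det).re

/-! If an eigenvector `v` of `h(p)` for a real eigenvalue has `v₁ = 0`, the real three-term
recursion given by the inner rows makes every `v_k` a real multiple of `v₂`. The first row then
reads `(a₁ + r a_N e^{ip}) v₂ = 0` with `r` real, and for `sin p ≠ 0` the factor is nonzero, so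
`v = 0`. Hence evaluation at the first coordinate is injective on each eigenspace and all
eigenvalues are simple. The sign of `Δ'` at each eigenvalue is read off the product formula for
`Δ`, and Rolle's theorem yields a critical point in each of the `N - 1` gaps, as many as the degree
of `Δ'` allows. -/

section RealRootedPolynomials

open Finset Lagrange

theorem neg_one_pow_card_Ioi_mul_eval_derivative_nodal_pos {ι K : Type*} [Fintype ι]
    [LinearOrder ι] [LocallyFiniteOrderTop ι] [LocallyFiniteOrderBot ι] [CommRing K]
    [LinearOrder K] [IsStrictOrderedRing K] {v : ι → K} (hv : StrictMono v) (j : ι) :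
    0 < (-1) ^ #(Ioi j) * (derivative (nodal univ v)).eval (v j) := by
  have above : 0 < ∏ i ∈ Ioi j, -(v j - v i) := by
    simp only [neg_sub]
    exact prod_pos fun i hi => sub_pos.2 (hv (mem_Ioi.1 hi))
  have below : 0 < ∏ i ∈ Iio j, (v j - v i) :=
    prod_pos fun i hi => sub_pos.2 (hv (mem_Iio.1 hi))
  rw [eval_nodal_derivative_eval_node_eq (mem_univ j), eval_nodal, erase_eq,
    ← compl_eq_univ_sdiff, ← Ioi_disjUnion_Iio, prod_disjUnion, ← mul_assoc, ← prod_neg]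
  exact mul_pos above below

theorem eval_eq_zero_iff_mem_range_of_natDegree_le {R : Type*} [CommRing R] [IsDomain R] {n : ℕ}
    {Q : R[X]} (hQ : Q ≠ 0) (hdeg : Q.natDegree ≤ n) {r : Fin n → R}
    (hr : Function.Injective r) (hroot : ∀ i, Q.eval (r i) = 0) (x : R) :
    Q.eval x = 0 ↔ x ∈ Set.range r := by
  have hroots : Q.roots = (univ.map ⟨r, hr⟩).val :=
    roots_eq_of_natDegree_le_card_of_ne_zero (by simpa using hroot) (by simpa using hdeg) hQ
  rw [← IsRoot.def, ← mem_roots hQ, hroots]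
  simp

theorem exists_strictMono_derivative_roots {n : ℕ} {P : ℝ[X]} (hP : P ≠ 0)
    (hdeg : P.natDegree ≤ n + 1) {lam : Fin (n + 1) → ℝ} (hlam : StrictMono lam)
    (hroot : ∀ j, P.eval (lam j) = 0) :
    ∃ mu : Fin n → ℝ, StrictMono mu ∧
      (∀ x, (derivative P).eval x = 0 ↔ x ∈ Set.range mu) ∧
      ∀ j, lam j.castSucc < mu j ∧ mu j < lam j.succ := by
  have rolle (j : Fin n) : ∃ m ∈ Set.Ioo (lam j.castSucc) (lam j.succ),
      deriv (fun x => P.eval x) m = 0 :=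
    exists_deriv_eq_zero (hlam Fin.castSucc_lt_succ) P.continuousOn (by rw [hroot, hroot])
  choose mu hmu hcrit using rolle
  simp only [Polynomial.deriv] at hcrit
  have mu_strictMono : StrictMono mu := fun i j hij =>
    (hmu i).2.trans_le ((hlam.monotone (Fin.succ_le_castSucc_iff.2 hij)).trans (hmu j).1.le)
  have derivative_ne_zero : derivative P ≠ 0 := fun h => by
    rw [eq_C_of_derivative_eq_zero h] at hroot hP
    exact hP (by simpa using hroot 0)
  have natDegree_le : (derivative P).natDegree ≤ n :=
    P.natDegree_derivative_le.trans (Nat.sub_le_of_le_add hdeg)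
  exact ⟨mu, mu_strictMono, eval_eq_zero_iff_mem_range_of_natDegree_le derivative_ne_zero
    natDegree_le mu_strictMono.injective hcrit, hmu⟩

end RealRootedPolynomials

section SimpleSpectrum

open Lagrange

variable {𝕜 : Type*} [RCLike 𝕜]

theorem eigenvalues_injective_of_eigenvector_apply_ne_zero {ι : Type*} [Fintype ι] [DecidableEq ι]
    {M : Matrix ι ι 𝕜} (hM : M.IsHermitian) (z : ι)
    (hz : ∀ (t : ℝ) (v : ι → 𝕜), M *ᵥ v = t • v → v z = 0 → v = 0) :
    Function.Injective hM.eigenvalues := by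
  intro i j hij
  by_contra hne
  let e := hM.eigenvectorBasis
  have he_i : M *ᵥ e i = hM.eigenvalues i • ⇑(e i) := hM.mulVec_eigenvectorBasis i
  have he_j : M *ᵥ e j = hM.eigenvalues i • ⇑(e j) := hij ▸ hM.mulVec_eigenvectorBasis j
  have combination_eq_zero : e j z • ⇑(e i) + (-e i z) • ⇑(e j) = 0 := by
    refine hz (hM.eigenvalues i) _ ?_ ?_
    · rw [mulVec_add, mulVec_smul, mulVec_smul, he_i, he_j, smul_add, smul_comm, smul_comm (-_)]
    · simp only [Pi.add_apply, Pi.smul_apply, smul_eq_mul]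
      ring
  have e_j_z : e j z = 0 :=
    ((LinearIndepOn.pair_iff _ hne).1 (e.orthonormal.linearIndependent.linearIndepOn _) _ _
      (WithLp.ofLp_injective 2 combination_eq_zero)).1
  exact e.orthonormal.ne_zero j (WithLp.ofLp_injective 2 (hz _ _ he_j e_j_z))

theorem exists_strictMono_charpoly_eq_prod {n : ℕ} {M : Matrix (Fin n) (Fin n) 𝕜}
    (hM : M.IsHermitian) (hinj : Function.Injective hM.eigenvalues) :
    ∃ lam : Fin n → ℝ, StrictMono lam ∧ M.charpoly = ∏ j, (X - C (lam j : 𝕜)) := by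
  let σ := Tuple.sort hM.eigenvalues
  refine ⟨hM.eigenvalues ∘ σ,
    (Tuple.monotone_sort _).strictMono_of_injective (hinj.comp σ.injective), ?_⟩
  rw [hM.charpoly_eq]
  exact (Equiv.prod_comp σ fun i => X - C (hM.eigenvalues i : 𝕜)).symm

theorem re_det_sub_smul_one {ι : Type*} [Fintype ι] [DecidableEq ι] {M : Matrix ι ι 𝕜}
    {lam : ι → ℝ} (hM : M.charpoly = ∏ j, (X - C (lam j : 𝕜))) (x : ℝ) :
    RCLike.re (M - (x : 𝕜) • (1 : Matrix ι ι 𝕜)).det =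
      (C ((-1) ^ Fintype.card ι) * nodal Finset.univ lam).eval x := by
  have det_eq : (M - (x : 𝕜) • (1 : Matrix ι ι 𝕜)).det =
      (((-1) ^ Fintype.card ι * ∏ j, (x - lam j) : ℝ) : 𝕜) := by
    rw [← neg_sub, det_neg, smul_one_eq_diagonal, ← scalar_apply, ← eval_charpoly, hM, eval_prod]
    simp
  rw [det_eq, RCLike.ofReal_re, eval_mul, eval_C, eval_nodal]

theorem exists_interlacing_of_eigenvalues_injective {n : ℕ}
    {M : Matrix (Fin (n + 1)) (Fin (n + 1)) 𝕜} (hM : M.IsHermitian)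
    (hinj : Function.Injective hM.eigenvalues) :
    let Δ : ℝ → ℝ := fun x => RCLike.re (M - (x : 𝕜) • (1 : Matrix _ _ 𝕜)).det
    ∃ lam : Fin (n + 1) → ℝ, StrictMono lam ∧ M.charpoly = ∏ j, (X - C (lam j : 𝕜)) ∧
      (∀ j : Fin (n + 1), 0 < (-1 : ℝ) ^ ((j : ℕ) + 1) * deriv Δ (lam j)) ∧
      ∃ mu : Fin n → ℝ, StrictMono mu ∧ (∀ x, deriv Δ x = 0 ↔ ∃ j, x = mu j) ∧
        ∀ j, lam j.castSucc < mu j ∧ mu j < lam j.succ := by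
  intro Δ
  obtain ⟨lam, hlam, hchar⟩ := exists_strictMono_charpoly_eq_prod hM hinj
  have deriv_Δ (x : ℝ) :
      deriv Δ x = (-1) ^ (n + 1) * (derivative (nodal Finset.univ lam)).eval x := by
    have hΔ : Δ = fun x => (C ((-1) ^ (n + 1)) * nodal Finset.univ lam).eval x := by
      funext x
      simpa only [Fintype.card_fin] using re_det_sub_smul_one hchar x
    rw [hΔ, Polynomial.deriv, derivative_C_mul, eval_mul, eval_C]
  refine ⟨lam, hlam, hchar, fun j => ?_, ?_⟩
  · have parity : (-1 : ℝ) ^ ((j : ℕ) + 1) * (-1) ^ (n + 1) = (-1) ^ (Finset.Ioi j).card := by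
      rw [Fin.card_Ioi, ← pow_add, neg_one_pow_congr]
      grind
    rw [deriv_Δ, ← mul_assoc, parity]
    exact neg_one_pow_card_Ioi_mul_eval_derivative_nodal_pos hlam j
  · obtain ⟨mu, hmu, hcrit, hbetween⟩ := exists_strictMono_derivative_roots nodal_ne_zero
      (by simp [natDegree_nodal]) hlam fun j => eval_nodal_at_node (Finset.mem_univ j)
    refine ⟨mu, hmu, fun x => ?_, hbetween⟩
    simpa [deriv_Δ, eq_comm (a := x)] using hcrit x

end SimpleSpectrum

section PeriodicMatrix

theorem mem_of_threeTermRecurrence {K E : Type*} [DivisionRing K] [AddCommGroup E] [Module K E]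
    (S : Submodule K E) {n : ℕ} {α β γ : Fin n → K} (hγ : ∀ k, γ k ≠ 0) {v : Fin (n + 2) → E}
    (hrec : ∀ k, α k • v k.castSucc.castSucc + β k • v k.castSucc.succ + γ k • v k.succ.succ = 0)
    (h0 : v 0 ∈ S) (h1 : v 1 ∈ S) (i : Fin (n + 2)) : v i ∈ S := by
  have consecutive (k : Fin (n + 1)) : v k.castSucc ∈ S ∧ v k.succ ∈ S := by
    induction k using Fin.induction with
    | zero => exact ⟨h0, h1⟩
    | succ k ih =>
      have next : γ k • v k.succ.succ ∈ S := by
        rw [eq_neg_of_add_eq_zero_right (hrec k)]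
        exact S.neg_mem (S.add_mem (S.smul_mem _ ih.1) (S.smul_mem _ ih.2))
      exact ⟨Fin.succ_castSucc k ▸ ih.2, (S.smul_mem_iff (hγ k)).1 next⟩
  exact i.cases h0 fun k => (consecutive k).2

variable (a b : ℕ → ℝ) (p : ℝ)

theorem hper_isHermitian (N : ℕ) : (hper N a b p).IsHermitian := by
  have conj_exp : (starRingEnd ℂ) (exp (p * I)) = exp (-(p * I)) := by
    rw [← exp_conj, map_mul, conj_ofReal, conj_I, mul_neg]
  have conj_exp_neg : (starRingEnd ℂ) (exp (-(p * I))) = exp (p * I) := by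
    rw [← conj_exp, conj_conj]
  ext i j
  simp only [conjTranspose_apply, hper, of_apply, star_def]
  split_ifs <;> first | omega | simp_all

theorem hper_row_zero {n : ℕ} :
    hper (n + 3) a b p 0 =
      Pi.single 0 (b 0 : ℂ) + Pi.single 1 (a 0 : ℂ) +
        Pi.single (Fin.last (n + 2)) (a (n + 2) * exp (p * I)) := by
  ext j
  simp only [hper, of_apply, Pi.add_apply, Pi.single_apply, Fin.ext_iff, Fin.val_zero,
    Fin.val_one, Fin.val_last]
  grind

theorem hper_row_castSucc_succ {n : ℕ} (k : Fin n) :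
    hper (n + 2) a b p k.castSucc.succ =
      Pi.single k.castSucc.castSucc (a k : ℂ) + Pi.single k.castSucc.succ (b (k + 1) : ℂ) +
        Pi.single k.succ.succ (a (k + 1) : ℂ) := by
  ext j
  simp only [hper, of_apply, Pi.add_apply, Pi.single_apply, Fin.ext_iff, Fin.val_succ,
    Fin.val_castSucc]
  grind

variable {a b p}

theorem hper_eigenvector_eq_zero {n : ℕ} (ha : ∀ k < n + 2, a k ≠ 0) (hp : Real.sin p ≠ 0)
    {t : ℝ} {v : Fin (n + 3) → ℂ} (hv : hper (n + 3) a b p *ᵥ v = t • v) (h0 : v 0 = 0) :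
    v = 0 := by
  have hrec (k : Fin (n + 1)) : a k • v k.castSucc.castSucc +
      (b (k + 1) - t) • v k.castSucc.succ + a (k + 1) • v k.succ.succ = 0 := by
    have row := congrFun hv k.castSucc.succ
    rw [mulVec, hper_row_castSucc_succ, Pi.smul_apply] at row
    simp only [add_dotProduct, single_dotProduct, real_smul] at row
    simp only [real_smul, ofReal_sub]
    linear_combination row
  have mem_of_mem (S : Submodule ℝ ℂ) (h1 : v 1 ∈ S) : ∀ i, v i ∈ S :=
    mem_of_threeTermRecurrence S (fun k => ha (k + 1) (by omega)) hrec (h0 ▸ S.zero_mem) h1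
  obtain ⟨r, hr⟩ := Submodule.mem_span_singleton.1 <|
    mem_of_mem (Submodule.span ℝ {v 1}) (Submodule.mem_span_singleton_self _) (Fin.last (n + 2))
  have first_row : (a 0 + a (n + 2) * r * exp (p * I)) * v 1 = 0 := by
    have row := congrFun hv 0
    rw [mulVec, hper_row_zero, Pi.smul_apply, h0, smul_zero] at row
    simp only [add_dotProduct, single_dotProduct, h0, ← hr, real_smul] at row
    linear_combination row
  have factor_ne_zero : (a 0 + a (n + 2) * r * exp (p * I) : ℂ) ≠ 0 := fun h => by
    have him : a (n + 2) * r = 0 := by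
      simpa [exp_ofReal_mul_I_im, hp] using congrArg im h
    rw [← ofReal_mul, him, ofReal_zero, zero_mul, add_zero] at h
    exact ha 0 (by omega) (ofReal_eq_zero.1 h)
  have h1 : v 1 = 0 := (mul_eq_zero.1 first_row).resolve_left factor_ne_zero
  exact funext (mem_of_mem ⊥ h1)

theorem hper_half_pi_eigenvalues_general (N : ℕ) (hN : 3 ≤ N) (a b : ℕ → ℝ) (p : ℝ)
    (hp : Real.sin p ≠ 0) (ha : ∀ k < N - 1, a k ≠ 0) :
    let Δ : ℝ → ℝ := fun x => (hper N a b p - (x : ℂ) • (1 : Matrix (Fin N) (Fin N) ℂ)).det.re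
    ∃ lam : Fin N → ℝ, StrictMono lam ∧
      (hper N a b p).charpoly = ∏ j : Fin N, (X - C ((lam j : ℝ) : ℂ)) ∧
      (∀ j : Fin N, 0 < (-1 : ℝ) ^ ((j : ℕ) + 1) * deriv Δ (lam j)) ∧
      ∃ mu : Fin (N - 1) → ℝ, StrictMono mu ∧
        (∀ x : ℝ, deriv Δ x = 0 ↔ ∃ j : Fin (N - 1), x = mu j) ∧
        ∀ j : Fin (N - 1),
          lam ⟨j.val, by omega⟩ < mu j ∧ mu j < lam ⟨j.val + 1, by omega⟩ := by
  obtain ⟨n, rfl⟩ := Nat.exists_eq_add_of_le' hN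
  exact exists_interlacing_of_eigenvalues_injective (hper_isHermitian a b p (n + 3)) <|
    eigenvalues_injective_of_eigenvector_apply_ne_zero _ 0 fun _ _ hv h0 =>
      hper_eigenvector_eq_zero ha hp hv h0

end PeriodicMatrix

/-- `h(π/2)` has `N` distinct real eigenvalues
`λ₁ < ⋯ < λ_N`, `(-1)^j Δ'(λ_j) > 0` for all `j`, and `Δ'` has exactly `N-1`
real roots `μ₁ < ⋯ < μ_{N-1}`, which satisfy `λ_j < μ_j < λ_{j+1}`. -/
theorem hper_half_pi_eigenvalues (N : ℕ) (hN : 3 ≤ N) (a b : ℕ → ℝ)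
    (ha : ∀ k < N, 0 < a k) :
    ∃ lam : Fin N → ℝ, StrictMono lam ∧
      (hper N a b (Real.pi / 2)).charpoly
        = ∏ j : Fin N, (X - C ((lam j : ℝ) : ℂ)) ∧
      (∀ j : Fin N,
        0 < (-1 : ℝ) ^ ((j : ℕ) + 1) * deriv (DeltaHalf N a b) (lam j)) ∧
      ∃ mu : Fin (N - 1) → ℝ, StrictMono mu ∧
        (∀ x : ℝ, deriv (DeltaHalf N a b) x = 0 ↔ ∃ j : Fin (N - 1), x = mu j) ∧
        ∀ j : Fin (N - 1),
          lam ⟨j.val, by have := j.isLt; omega⟩ < mu j ∧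
          mu j < lam ⟨j.val + 1, by have := j.isLt; omega⟩ :=
  hper_half_pi_eigenvalues_general N hN a b (Real.pi / 2) (by simp) fun k hk =>
    (ha k (by omega)).ne'
end

section
/- Let a, b, c, d > 0 be real numbers and for p ∈ ℝ let h(p) be the 2×2 Hermitian matrix [[2a cos p, d + c e^{ip}], [d + c e^{−ip}, 2b cos p]]. Then: (i) for every p ∈ ℝ, the eigenvalues of h(p) are λ±(p) = (a+b)cos p ± √((a−b)²cos²p + (d−c)² + 4dc·cos²(p/2)); (ii) for p ∈ [−π, π], h(p) has a repeated eigenvalue (λ₊(p) = λ₋(p)) if and only if |p| = π, a = b and c = d. -/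
open Matrix Complex

/-- The 2×2 Hermitian symbol `h(p) = [[2a cos p, d + c e^{ip}], [d + c e^{-ip}, 2b cos p]]`. -/
noncomputable def h2 (a b c d : ℝ) (p : ℝ) : Matrix (Fin 2) (Fin 2) ℂ :=
  !![((2 * a * Real.cos p : ℝ) : ℂ), (d : ℂ) + (c : ℂ) * Complex.exp ((p : ℂ) * Complex.I);
     (d : ℂ) + (c : ℂ) * Complex.exp (-((p : ℂ) * Complex.I)), ((2 * b * Real.cos p : ℝ) : ℂ)]

/-- `λ₊(p)`. -/
noncomputable def lamP (a b c d : ℝ) (p : ℝ) : ℝ :=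
  (a + b) * Real.cos p
    + Real.sqrt ((a - b) ^ 2 * (Real.cos p) ^ 2 + (d - c) ^ 2
        + 4 * d * c * (Real.cos (p / 2)) ^ 2)

/-- `λ₋(p)`. -/
noncomputable def lamM (a b c d : ℝ) (p : ℝ) : ℝ :=
  (a + b) * Real.cos p
    - Real.sqrt ((a - b) ^ 2 * (Real.cos p) ^ 2 + (d - c) ^ 2
        + 4 * d * c * (Real.cos (p / 2)) ^ 2)

/-! Half the trace of `h(p)` is `(a + b) cos p`, and its square exceeds `det h(p)` by
`(a - b)² cos² p + |d + c e^{ip}|²`, so the quadratic formula gives `λ±(p)`. Moreover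
`|d + c e^{ip}|² = (d - c)² sin² (p / 2) + (d + c)² cos² (p / 2)`. The eigenvalues therefore
coincide exactly when three squares vanish; if `c + d ≠ 0`, this forces `cos (p / 2) = 0`, and
then `sin² (p / 2) = cos² p = 1` leaves `c = d` and `a = b`. -/

theorem det_sub_smul_one_eq_zero_iff {R : Type*} [CommRing R] [NoZeroDivisors R]
    {M : Matrix (Fin 2) (Fin 2) R} {m s : R} (htrace : M.trace = 2 * m)
    (hs : s ^ 2 = m ^ 2 - M.det) (x : R) :
    (M - x • (1 : Matrix (Fin 2) (Fin 2) R)).det = 0 ↔ x = m + s ∨ x = m - s := by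
  have hfactor : (M - x • (1 : Matrix (Fin 2) (Fin 2) R)).det =
      (x - (m + s)) * (x - (m - s)) := by
    rw [trace_fin_two] at htrace
    rw [det_fin_two] at hs
    simp only [det_fin_two, Matrix.sub_apply, Matrix.smul_apply, one_apply_eq, smul_eq_mul,
      mul_one, one_apply_ne zero_ne_one, one_apply_ne one_ne_zero, mul_zero, sub_zero]
    linear_combination hs - x * htrace
  rw [hfactor, mul_eq_zero, sub_eq_zero, sub_eq_zero]

theorem cos_eq_two_mul_sq_cos_half_sub_one (p : ℝ) :
    Real.cos p = 2 * Real.cos (p / 2) ^ 2 - 1 := by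
  rw [← Real.cos_two_mul, mul_div_cancel₀ p two_ne_zero]

theorem cos_half_eq_zero_iff_abs_eq_pi {p : ℝ} (hp : p ∈ Set.Icc (-Real.pi) Real.pi) :
    Real.cos (p / 2) = 0 ↔ |p| = Real.pi := by
  constructor
  · intro hcos
    refine (abs_le.mpr hp).eq_of_not_lt fun hlt => ?_
    have hmem : p / 2 ∈ Set.Ioo (-(Real.pi / 2)) (Real.pi / 2) := by
      constructor <;> linarith [abs_lt.mp hlt]
    exact (Real.cos_pos_of_mem_Ioo hmem).ne' hcos
  · intro habs
    rw [← Real.cos_abs, abs_div, habs, abs_two, Real.cos_pi_div_two]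

/-- The expression under the square root in `λ±(p)`, a quarter of the discriminant of the
characteristic polynomial of `h(p)`. -/
noncomputable def h2QuarterDiscr (a b c d p : ℝ) : ℝ :=
  (a - b) ^ 2 * Real.cos p ^ 2 + (d - c) ^ 2 + 4 * d * c * Real.cos (p / 2) ^ 2

section

variable (a b c d p : ℝ)

theorem trace_h2 : (h2 a b c d p).trace = 2 * (((a + b) * Real.cos p : ℝ) : ℂ) := by
  simp only [h2, trace_fin_two_of]
  push_cast
  ring

theorem det_h2 : (h2 a b c d p).det =
    ((4 * a * b * Real.cos p ^ 2 - (d ^ 2 + c ^ 2 + 2 * d * c * Real.cos p) : ℝ) : ℂ) := by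
  have hprod : exp (p * I) * exp (-(p * I)) = 1 := by
    rw [← exp_add, add_neg_cancel, exp_zero]
  have hsum : exp (p * I) + exp (-(p * I)) = 2 * Complex.cos p := by
    rw [two_cos, neg_mul]
  simp only [h2, det_fin_two_of]
  push_cast
  linear_combination -(c : ℂ) ^ 2 * hprod - (d : ℂ) * c * hsum

theorem h2QuarterDiscr_eq_sq_sub_det : (h2QuarterDiscr a b c d p : ℂ) =
    (((a + b) * Real.cos p : ℝ) : ℂ) ^ 2 - (h2 a b c d p).det := by
  have hcos : (Real.cos p : ℂ) = 2 * (Real.cos (p / 2) : ℂ) ^ 2 - 1 :=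
    mod_cast congrArg ofReal (cos_eq_two_mul_sq_cos_half_sub_one p)
  simp only [det_h2, h2QuarterDiscr, ofReal_add, ofReal_sub, ofReal_mul, ofReal_pow, ofReal_ofNat]
  linear_combination -2 * (d : ℂ) * c * hcos

theorem h2QuarterDiscr_eq_sum_sq : h2QuarterDiscr a b c d p =
    ((a - b) * Real.cos p) ^ 2 + ((d - c) * Real.sin (p / 2)) ^ 2 +
      ((c + d) * Real.cos (p / 2)) ^ 2 := by
  rw [h2QuarterDiscr]
  linear_combination -(d - c) ^ 2 * Real.sin_sq_add_cos_sq (p / 2)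

theorem h2QuarterDiscr_nonneg : 0 ≤ h2QuarterDiscr a b c d p := by
  rw [h2QuarterDiscr_eq_sum_sq]
  positivity

theorem det_h2_sub_smul_one_eq_zero_iff (x : ℂ) :
    (h2 a b c d p - x • (1 : Matrix (Fin 2) (Fin 2) ℂ)).det = 0 ↔
      x = (lamP a b c d p : ℂ) ∨ x = (lamM a b c d p : ℂ) := by
  have hsq : (√(h2QuarterDiscr a b c d p) : ℂ) ^ 2 =
      (((a + b) * Real.cos p : ℝ) : ℂ) ^ 2 - (h2 a b c d p).det := by
    rw [← ofReal_pow, Real.sq_sqrt (h2QuarterDiscr_nonneg a b c d p), h2QuarterDiscr_eq_sq_sub_det]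
  rw [det_sub_smul_one_eq_zero_iff (trace_h2 a b c d p) hsq, ← ofReal_add, ← ofReal_sub]
  rfl

theorem lamP_eq_lamM_iff_h2QuarterDiscr_eq_zero :
    lamP a b c d p = lamM a b c d p ↔ h2QuarterDiscr a b c d p = 0 := by
  rw [← Real.sqrt_eq_zero (h2QuarterDiscr_nonneg a b c d p), ← self_eq_neg,
    ← add_right_inj (a := (a + b) * Real.cos p) (b := √_), ← sub_eq_add_neg]
  rfl

end

theorem h2QuarterDiscr_eq_zero_iff {a b c d p : ℝ} (hcd : c + d ≠ 0) :
    h2QuarterDiscr a b c d p = 0 ↔ Real.cos (p / 2) = 0 ∧ a = b ∧ c = d := by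
  constructor
  · intro hzero
    rw [h2QuarterDiscr_eq_sum_sq, add_eq_zero_iff_of_nonneg (by positivity) (by positivity),
      add_eq_zero_iff_of_nonneg (by positivity) (by positivity)] at hzero
    simp only [sq_eq_zero_iff, mul_eq_zero, hcd, false_or, sub_eq_zero] at hzero
    obtain ⟨⟨hab, hdc⟩, hhalf⟩ := hzero
    have hcos : Real.cos p ≠ 0 := by
      norm_num [cos_eq_two_mul_sq_cos_half_sub_one p, hhalf]
    have hsin : Real.sin (p / 2) ≠ 0 := by
      rw [← sq_eq_zero_iff.ne, Real.sin_sq, hhalf]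
      norm_num
    exact ⟨hhalf, hab.resolve_right hcos, (hdc.resolve_right hsin).symm⟩
  · rintro ⟨hhalf, rfl, rfl⟩
    simp only [h2QuarterDiscr_eq_sum_sq, hhalf, sub_self, zero_mul, mul_zero, zero_pow two_ne_zero,
      add_zero]

theorem h2_eigenvalues_general (a b c d : ℝ) :
    (∀ (p : ℝ) (x : ℂ),
      (h2 a b c d p - x • (1 : Matrix (Fin 2) (Fin 2) ℂ)).det = 0 ↔
        (x = ((lamP a b c d p : ℝ) : ℂ) ∨ x = ((lamM a b c d p : ℝ) : ℂ))) ∧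
    (c + d ≠ 0 → ∀ p ∈ Set.Icc (-Real.pi) Real.pi,
      (lamP a b c d p = lamM a b c d p ↔ (|p| = Real.pi ∧ a = b ∧ c = d))) := by
  refine ⟨det_h2_sub_smul_one_eq_zero_iff a b c d, fun hcd p hp => ?_⟩
  rw [lamP_eq_lamM_iff_h2QuarterDiscr_eq_zero, h2QuarterDiscr_eq_zero_iff hcd,
    cos_half_eq_zero_iff_abs_eq_pi hp]

/-- (i) The eigenvalues of `h(p)` are exactly
`λ±(p) = (a+b)cos p ± √((a−b)²cos²p + (d−c)² + 4dc cos²(p/2))`;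
(ii) for `p ∈ [−π, π]`, `h(p)` has a repeated eigenvalue iff `|p| = π`, `a = b`
and `c = d`. -/
theorem h2_eigenvalues (a b c d : ℝ)
    (ha : 0 < a) (hb : 0 < b) (hc : 0 < c) (hd : 0 < d) :
    (∀ (p : ℝ) (x : ℂ),
      (h2 a b c d p - x • (1 : Matrix (Fin 2) (Fin 2) ℂ)).det = 0 ↔
        (x = ((lamP a b c d p : ℝ) : ℂ) ∨ x = ((lamM a b c d p : ℝ) : ℂ))) ∧
    (∀ p ∈ Set.Icc (-Real.pi) Real.pi,
      (lamP a b c d p = lamM a b c d p ↔ (|p| = Real.pi ∧ a = b ∧ c = d))) := by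
  have hgeneral := h2_eigenvalues_general a b c d
  exact ⟨hgeneral.1, hgeneral.2 (add_pos hc hd).ne'⟩
end
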